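/- Suppose G ⊂ ℝⁿ is a bounded domain satisfying a β-quasihyperbolic boundary condition, β ∈ (0,1], with dim_M(∂G) ≤ λ ∈ [n-1, n), and suppose 1 ≤ q < p < ∞ with p > q(n - λβ)/(q + β(n - λ)). Then there exists a finite constant c such that (∫_G |u - u_G|^q dx)^{1/q} ≤ c (∫_G |∇u|^p dx)^{1/p} for all u ∈ W^{1,p}(G), where u_G is the mean of u over G. -/

import Mathlib

open MeasureTheory ENNReal

/-- The quasihyperbolic distance `k_G(x, y) = inf_γ ∫_γ ds / dist(z, ∂G)`, the infimum
being over rectifiable curves in `G` from `x` to `y`, parametrized by arc length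
(encoded as `1`-Lipschitz parametrizations). -/
noncomputable def qhDist {n : ℕ} (G : Set (EuclideanSpace ℝ (Fin n)))
    (x y : EuclideanSpace ℝ (Fin n)) : ℝ :=
  sInf {v : ℝ | ∃ (L : ℝ) (γ : ℝ → EuclideanSpace ℝ (Fin n)), 0 ≤ L ∧
    LipschitzWith 1 γ ∧ γ 0 = x ∧ γ L = y ∧ (∀ t ∈ Set.Icc (0:ℝ) L, γ t ∈ G) ∧
    v = ∫ t in (0:ℝ)..L, 1 / Metric.infDist (γ t) (frontier G)}

/-- `G` satisfies a `β`-quasihyperbolic boundary condition with base point `x₀` and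
constant `c`: `k_G(x, x₀) ≤ (1/β) log(1/dist(x, ∂G)) + c` for all `x ∈ G`. -/
def QHBCWith {n : ℕ} (G : Set (EuclideanSpace ℝ (Fin n))) (β : ℝ)
    (x₀ : EuclideanSpace ℝ (Fin n)) (c : ℝ) : Prop :=
  ∀ x ∈ G, qhDist G x x₀ ≤ (1 / β) * Real.log (1 / Metric.infDist x (frontier G)) + c

/-- `G` satisfies a `β`-quasihyperbolic boundary condition. -/
def QHBC {n : ℕ} (G : Set (EuclideanSpace ℝ (Fin n))) (β : ℝ) : Prop :=
  ∃ x₀ ∈ G, ∃ c : ℝ, QHBCWith G β x₀ c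

/-- `G` supports the `(q,p)`-Poincaré inequality
`(∫_G |u - u_G|^q)^{1/q} ≤ c (∫_G |∇u|^p)^{1/p}` for Sobolev functions on `G`. -/
def SupportsPoincare {n : ℕ} (G : Set (EuclideanSpace ℝ (Fin n))) (q p : ℝ) : Prop :=
  ∃ c : ℝ, ∀ u : EuclideanSpace ℝ (Fin n) → ℝ,
    DifferentiableOn ℝ u G → IntegrableOn u G volume →
    IntegrableOn (fun x => ‖fderivWithin ℝ u G x‖ ^ p) G volume →
    (∫ x in G, |u x - (∫ y in G, u y) / (volume G).toReal| ^ q) ^ (1 / q)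
      ≤ c * (∫ x in G, ‖fderivWithin ℝ u G x‖ ^ p) ^ (1 / p)

/-- The `λ`-dimensional Minkowski precontent
`M_λ(E, r) = |⋃_{x ∈ E} B(x, r)| / r^{n-λ}`. -/
noncomputable def minkowskiPrecontent (n : ℕ) (E : Set (EuclideanSpace ℝ (Fin n)))
    (l r : ℝ) : ℝ≥0∞ :=
  volume (⋃ x ∈ E, Metric.ball x r) / ENNReal.ofReal (r ^ ((n : ℝ) - l))

/-- The upper Minkowski dimension
`dim_M(E) = sup {λ ≥ 0 : limsup_{r → 0+} M_λ(E, r) = ∞}`. -/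
noncomputable def upperMinkowskiDim (n : ℕ) (E : Set (EuclideanSpace ℝ (Fin n))) : ℝ :=
  sSup {l : ℝ | 0 ≤ l ∧
    Filter.limsup (fun r => minkowskiPrecontent n E l r) (nhdsWithin 0 (Set.Ioi 0)) = ⊤}

/-!
A nearly optimal quasihyperbolic curve from `x` to `x₀` is followed by a chain of Whitney balls.
The boundary condition bounds the number of balls by a multiple of `log (1 / dist(x, ∂G))` and
places `x` within distance `C * dist(z, ∂G) ^ β` of every centre `z` of the chain. The Poincaré
inequality on convex sets, applied on each ball and telescoped along the chains that start in a
Whitney net, bounds `∫ |u - m₀| ^ q` by a sum over all links of all chains. Hölder's inequality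
with exponents `p / q` and `p / (p - q)` splits this sum into two factors. In the first one a ball
about `z` is only met by chains starting in a ball of radius `C * dist(z, ∂G) ^ β`, so that a
packing estimate leaves a multiple of `∫ |∇u| ^ p`. The second one is finite because
`∫ dist(x, ∂G) ^ (-s)` is finite for `s < n - λ`, which is what the Minkowski dimension controls;
the lower bound on `p` is exactly the condition on the exponents needed here. Replacing `m₀` by the
mean of `u` costs a factor `2 ^ q`.
-/

open Module AffineMap

section PoincareOnConvexSets

variable {E F : Type*} [NormedAddCommGroup E] [NormedSpace ℝ E] [NormedAddCommGroup F]
  [NormedSpace ℝ F] [CompleteSpace F] {u : E → F} {B : Set E} {q : ℝ}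

theorem enorm_sub_le_enorm_mul_lintegral_enorm_fderiv {x y : E}
    (hu : ∀ t ∈ Set.Icc (0 : ℝ) 1, DifferentiableAt ℝ u (lineMap x y t)) :
    ‖u y - u x‖ₑ ≤ ‖y - x‖ₑ * ∫⁻ t in Set.Ioc (0 : ℝ) 1, ‖fderiv ℝ u (lineMap x y t)‖ₑ := by
  rw [← lintegral_const_mul' _ _ enorm_ne_top]
  set g : ℝ → F := fun t => u (lineMap x y t)
  have hasDeriv_g : ∀ t ∈ Set.Icc (0 : ℝ) 1,
      HasDerivAt g (fderiv ℝ u (lineMap x y t) (y - x)) t := fun t ht =>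
    (hu t ht).hasFDerivAt.comp_hasDerivAt t hasDerivAt_lineMap
  have enorm_deriv_g : ∀ t ∈ Set.Ioc (0 : ℝ) 1,
      ‖deriv g t‖ₑ ≤ ‖y - x‖ₑ * ‖fderiv ℝ u (lineMap x y t)‖ₑ := fun t ht => by
    rw [(hasDeriv_g t (Set.Ioc_subset_Icc_self ht)).deriv, mul_comm]
    exact ContinuousLinearMap.le_opENorm _ _
  by_cases htop : ∫⁻ t in Set.Ioc (0 : ℝ) 1, ‖y - x‖ₑ * ‖fderiv ℝ u (lineMap x y t)‖ₑ = ⊤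
  · exact htop ▸ le_top
  have integral_le := setLIntegral_mono' (μ := volume) measurableSet_Ioc enorm_deriv_g
  have integrable : IntervalIntegrable (deriv g) volume 0 1 := by
    rw [intervalIntegrable_iff_integrableOn_Ioc_of_le zero_le_one]
    exact ⟨(stronglyMeasurable_deriv g).aestronglyMeasurable,
      integral_le.trans_lt (lt_top_iff_ne_top.2 htop)⟩
  have ftc := intervalIntegral.integral_deriv_eq_sub
    (fun t ht => (hasDeriv_g t (by rwa [Set.uIcc_of_le zero_le_one] at ht)).differentiableAt)
    integrable
  simp only [g, lineMap_apply_one, lineMap_apply_zero] at ftc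
  rw [← ftc, intervalIntegral.integral_of_le zero_le_one]
  exact (enorm_integral_le_lintegral_enorm _).trans integral_le

theorem rpow_lintegral_le_lintegral_rpow {α : Type*} [MeasurableSpace α] (μ : Measure α)
    [IsProbabilityMeasure μ] (hq : 1 ≤ q) {f : α → ℝ≥0∞} (hf : AEMeasurable f μ) :
    (∫⁻ a, f a ∂μ) ^ q ≤ ∫⁻ a, f a ^ q ∂μ := by
  rcases hq.eq_or_lt with rfl | hq1
  · simp
  have holder := ENNReal.lintegral_mul_le_Lp_mul_Lq μ (Real.HolderConjugate.conjExponent hq1) hf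
    (aemeasurable_const (b := (1 : ℝ≥0∞)))
  simp only [Pi.mul_apply, mul_one, ENNReal.one_rpow, lintegral_const, measure_univ] at holder
  calc (∫⁻ a, f a ∂μ) ^ q ≤ ((∫⁻ a, f a ^ q ∂μ) ^ (1 / q)) ^ q := by gcongr
    _ = ∫⁻ a, f a ^ q ∂μ := by
      rw [← ENNReal.rpow_mul, one_div_mul_cancel (by linarith), ENNReal.rpow_one]

variable [MeasurableSpace E] [BorelSpace E]

theorem enorm_sub_rpow_le_lintegral_fderiv_lineMap (hq : 1 ≤ q) {x y : E}
    (hu : ∀ t ∈ Set.Icc (0 : ℝ) 1, DifferentiableAt ℝ u (lineMap x y t)) :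
    ‖u y - u x‖ₑ ^ q ≤
      ‖y - x‖ₑ ^ q * ∫⁻ t in Set.Ioc (0 : ℝ) 1, ‖fderiv ℝ u (lineMap x y t)‖ₑ ^ q := by
  have hq0 : 0 ≤ q := zero_le_one.trans hq
  have : IsProbabilityMeasure ((volume : Measure ℝ).restrict (Set.Ioc (0 : ℝ) 1)) := ⟨by simp⟩
  refine (ENNReal.rpow_le_rpow (enorm_sub_le_enorm_mul_lintegral_enorm_fderiv hu) hq0).trans ?_
  rw [ENNReal.mul_rpow_of_nonneg _ _ hq0]
  gcongr
  exact rpow_lintegral_le_lintegral_rpow _ hq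
    (((measurable_fderiv ℝ u).comp lineMap_continuous.measurable).enorm.aemeasurable)

variable [FiniteDimensional ℝ E] {μ : Measure E} [μ.IsAddHaarMeasure] {h : E → ℝ≥0∞}

theorem setLIntegral_comp_lineMap_le (hB : MeasurableSet B) (hc : Convex ℝ B) (hh : Measurable h)
    {x : E} (hx : x ∈ B) {t : ℝ} (ht : t ∈ Set.Icc (1 / 2) 1) :
    ∫⁻ y in B, h (lineMap x y t) ∂μ ≤ 2 ^ finrank ℝ E * ∫⁻ y in B, h y ∂μ := by
  have ht0 : 0 < t := by linarith [ht.1]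
  have meas : Measurable (fun z => B.indicator h (x - t • x + z)) :=
    (hh.indicator hB).comp (by fun_prop)
  calc ∫⁻ y in B, h (lineMap x y t) ∂μ
      ≤ ∫⁻ y in B, B.indicator h (x - t • x + t • y) ∂μ := by
        refine setLIntegral_mono' hB fun y hy => ?_
        have : x - t • x + t • y = lineMap x y t := by rw [lineMap_apply_module]; module
        rw [this, Set.indicator_of_mem (hc.lineMap_mem hx hy ⟨ht0.le, ht.2⟩)]
    _ ≤ ∫⁻ y, B.indicator h (x - t • x + t • y) ∂μ := setLIntegral_le_lintegral _ _
    _ = ∫⁻ z, B.indicator h (x - t • x + z) ∂(μ.map (t • ·)) := by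
        rw [lintegral_map meas (by fun_prop)]
    _ = ENNReal.ofReal |(t ^ finrank ℝ E)⁻¹| * ∫⁻ z, B.indicator h z ∂μ := by
        rw [Measure.map_addHaar_smul _ ht0.ne', lintegral_smul_measure, lintegral_add_left_eq_self,
          smul_eq_mul]
    _ ≤ 2 ^ finrank ℝ E * ∫⁻ y in B, h y ∂μ := by
        rw [lintegral_indicator hB, abs_of_pos (by positivity), ← inv_pow]
        gcongr
        refine ENNReal.ofReal_le_of_le_toReal ?_
        rw [toReal_pow, toReal_ofNat]
        gcongr
        exact inv_le_of_inv_le₀ two_pos (by linarith [ht.1])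

theorem measurable_comp_lineMap (hh : Measurable h) :
    Measurable fun z : (ℝ × E) × E => h (lineMap z.1.2 z.2 z.1.1) := by
  simp only [lineMap_apply_module']
  exact hh.comp (by fun_prop)

-- For `t ≤ 1 / 2` the roles of `x` and `y` are exchanged, so that the contraction factor
-- in the change of variables always is at least `1 / 2`.
theorem setLIntegral_setLIntegral_lineMap_le (hB : MeasurableSet B) (hc : Convex ℝ B)
    (hh : Measurable h) {t : ℝ} (ht : t ∈ Set.Icc 0 1) :
    ∫⁻ x in B, ∫⁻ y in B, h (lineMap x y t) ∂μ ∂μ ≤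
      2 ^ finrank ℝ E * (μ B * ∫⁻ y in B, h y ∂μ) := by
  have large : ∀ s ∈ Set.Icc (1 / 2 : ℝ) 1, ∫⁻ x in B, ∫⁻ y in B, h (lineMap x y s) ∂μ ∂μ ≤
      2 ^ finrank ℝ E * (μ B * ∫⁻ y in B, h y ∂μ) := fun s hs =>
    calc ∫⁻ x in B, ∫⁻ y in B, h (lineMap x y s) ∂μ ∂μ
        ≤ ∫⁻ _ in B, 2 ^ finrank ℝ E * ∫⁻ y in B, h y ∂μ ∂μ :=
          setLIntegral_mono' hB fun x hx => setLIntegral_comp_lineMap_le hB hc hh hx hs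
      _ = 2 ^ finrank ℝ E * (μ B * ∫⁻ y in B, h y ∂μ) := by
          rw [lintegral_const, Measure.restrict_apply_univ]; ring
  rcases le_total (1 / 2) t with hle | hle
  · exact large t ⟨hle, ht.2⟩
  · rw [lintegral_lintegral_swap (f := fun x y => h (lineMap x y t))
      ((measurable_comp_lineMap hh).comp
        (by fun_prop : Measurable fun z : E × E => ((t, z.1), z.2))).aemeasurable]
    simpa only [lineMap_apply_one_sub] using large (1 - t) ⟨by linarith, by linarith [ht.1]⟩

theorem lintegral_lintegral_lintegral_lineMap_comm (hh : Measurable h) :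
    ∫⁻ x in B, ∫⁻ y in B, (∫⁻ t in Set.Ioc (0 : ℝ) 1, h (lineMap x y t)) ∂μ ∂μ =
      ∫⁻ t in Set.Ioc (0 : ℝ) 1, ∫⁻ x in B, ∫⁻ y in B, h (lineMap x y t) ∂μ ∂μ := by
  have meas := measurable_comp_lineMap hh
  rw [lintegral_lintegral_swap (μ := volume.restrict (Set.Ioc (0 : ℝ) 1))
    meas.lintegral_prod_right'.aemeasurable]
  refine lintegral_congr fun x => lintegral_lintegral_swap ?_
  exact (meas.comp (by fun_prop : Measurable fun z : E × ℝ => ((z.2, x), z.1))).aemeasurable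

theorem lintegral_lintegral_enorm_sub_rpow_le (hB : MeasurableSet B) (hc : Convex ℝ B)
    (hu : ∀ x ∈ B, DifferentiableAt ℝ u x) (hq : 1 ≤ q) {R : ℝ≥0∞}
    (hR : ∀ x ∈ B, ∀ y ∈ B, ‖y - x‖ₑ ≤ R) (hRt : R ≠ ⊤) :
    ∫⁻ x in B, ∫⁻ y in B, ‖u y - u x‖ₑ ^ q ∂μ ∂μ ≤
      R ^ q * (2 ^ finrank ℝ E * (μ B * ∫⁻ y in B, ‖fderiv ℝ u y‖ₑ ^ q ∂μ)) := by
  set h : E → ℝ≥0∞ := fun y => ‖fderiv ℝ u y‖ₑ ^ q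
  have hh : Measurable h := (measurable_fderiv ℝ u).enorm.pow_const q
  have pointwise : ∀ x ∈ B, ∀ y ∈ B,
      ‖u y - u x‖ₑ ^ q ≤ R ^ q * ∫⁻ t in Set.Ioc (0 : ℝ) 1, h (lineMap x y t) := fun x hx y hy =>
    (enorm_sub_rpow_le_lintegral_fderiv_lineMap hq fun t ht => hu _ (hc.lineMap_mem hx hy ht)).trans
      (by gcongr; exact hR x hx y hy)
  have hRq : R ^ q ≠ ⊤ := ENNReal.rpow_ne_top_of_nonneg (zero_le_one.trans hq) hRt
  calc ∫⁻ x in B, ∫⁻ y in B, ‖u y - u x‖ₑ ^ q ∂μ ∂μ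
      ≤ ∫⁻ x in B, ∫⁻ y in B, R ^ q * (∫⁻ t in Set.Ioc (0 : ℝ) 1, h (lineMap x y t)) ∂μ ∂μ :=
        setLIntegral_mono' hB fun x hx => setLIntegral_mono' hB (pointwise x hx)
    _ = R ^ q * ∫⁻ t in Set.Ioc (0 : ℝ) 1, ∫⁻ x in B, ∫⁻ y in B, h (lineMap x y t) ∂μ ∂μ := by
        simp only [lintegral_const_mul' _ _ hRq, lintegral_lintegral_lintegral_lineMap_comm hh]
    _ ≤ R ^ q * ∫⁻ _ in Set.Ioc (0 : ℝ) 1, 2 ^ finrank ℝ E * (μ B * ∫⁻ y in B, h y ∂μ) := by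
        gcongr 1
        exact setLIntegral_mono' measurableSet_Ioc fun t ht =>
          setLIntegral_setLIntegral_lineMap_le hB hc hh (Set.Ioc_subset_Icc_self ht)
    _ = R ^ q * (2 ^ finrank ℝ E * (μ B * ∫⁻ y in B, h y ∂μ)) := by simp

theorem exists_lintegral_enorm_sub_rpow_le_of_convex (hB : MeasurableSet B) (hc : Convex ℝ B)
    (hu : ∀ x ∈ B, DifferentiableAt ℝ u x) (hq : 1 ≤ q) {R : ℝ≥0∞}
    (hR : ∀ x ∈ B, ∀ y ∈ B, ‖y - x‖ₑ ≤ R) (hRt : R ≠ ⊤) (hv0 : μ B ≠ 0) (hvt : μ B ≠ ⊤) :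
    ∃ m : F, ∫⁻ y in B, ‖u y - m‖ₑ ^ q ∂μ ≤
      R ^ q * (2 ^ finrank ℝ E * ∫⁻ y in B, ‖fderiv ℝ u y‖ₑ ^ q ∂μ) := by
  have hum : AEStronglyMeasurable u (μ.restrict B) :=
    ContinuousOn.aestronglyMeasurable
      (fun x hx => (hu x hx).continuousAt.continuousWithinAt) hB
  have meas : AEMeasurable (fun x => ∫⁻ y in B, ‖u y - u x‖ₑ ^ q ∂μ) (μ.restrict B) :=
    ((hum.comp_snd.sub hum.comp_fst).enorm.pow_const q).lintegral_prod_right'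
  obtain ⟨x, -, hx⟩ := exists_le_setLAverage hv0 hvt meas
  refine ⟨u x, hx.trans ?_⟩
  rw [setLAverage_eq]
  refine ENNReal.div_le_of_le_mul
    ((lintegral_lintegral_enorm_sub_rpow_le hB hc hu hq hR hRt).trans_eq ?_)
  ring

end PoincareOnConvexSets

section BoundaryDistance

variable {X : Type*} [PseudoMetricSpace X] {G : Set X} {x y : X} {r : ℝ}

/-- The distance from `x` to the boundary of `G`, which is `dist (x, ∂G)` for `x ∈ G`. -/
noncomputable def boundaryDist (G : Set X) (x : X) : ℝ :=
  Metric.infDist x (frontier G)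

theorem boundaryDist_nonneg : 0 ≤ boundaryDist G x :=
  Metric.infDist_nonneg

theorem boundaryDist_le_add_dist (G : Set X) (x y : X) :
    boundaryDist G x ≤ boundaryDist G y + dist x y :=
  Metric.infDist_le_infDist_add_dist

theorem continuous_boundaryDist (G : Set X) : Continuous (boundaryDist G) :=
  Metric.continuous_infDist_pt _

theorem boundaryDist_pos (hG : IsOpen G) (hfr : (frontier G).Nonempty) (hx : x ∈ G) :
    0 < boundaryDist G x := by
  rw [boundaryDist, ← isClosed_frontier.notMem_iff_infDist_pos hfr, hG.frontier_eq]
  exact fun h => h.2 hx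

theorem exists_boundaryDist_le (hGb : Bornology.IsBounded G) (hfr : (frontier G).Nonempty) :
    ∃ D : ℝ, 1 ≤ D ∧ ∀ x ∈ G, boundaryDist G x ≤ D := by
  obtain ⟨y, hy⟩ := hfr
  obtain ⟨R, hR⟩ := hGb.subset_closedBall y
  exact ⟨max 1 R, le_max_left _ _, fun x hx =>
    (Metric.infDist_le_dist_of_mem hy).trans ((hR hx).trans (le_max_right _ _))⟩

/-- The ball about `z` of half the radius that fits into `G`; these balls play the role of the
Whitney cubes of `G`. -/
def whitneyBall (G : Set X) (z : X) : Set X :=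
  Metric.ball z (boundaryDist G z / 2)

theorem closedBall_subset_whitneyBall (hr : r < boundaryDist G x / 2) :
    Metric.closedBall x r ⊆ whitneyBall G x :=
  Metric.closedBall_subset_ball hr

theorem isOpen_whitneyBall : IsOpen (whitneyBall G x) :=
  Metric.isOpen_ball

theorem dist_le_of_mem_whitneyBall {z : X} (hx : x ∈ whitneyBall G z) (hy : y ∈ whitneyBall G z) :
    dist y x ≤ boundaryDist G z := by
  linarith [dist_triangle_right y x z, Metric.mem_ball.1 hx, Metric.mem_ball.1 hy]

end BoundaryDistance

section BoundaryDistanceNormed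

variable {E : Type*} [NormedAddCommGroup E] [NormedSpace ℝ E] {G : Set E} {x y : E}

theorem frontier_nonempty_of_isBounded [Nontrivial E] (hGb : Bornology.IsBounded G)
    (hne : G.Nonempty) : (frontier G).Nonempty :=
  nonempty_frontier_iff.2 ⟨hne, by rintro rfl; exact NormedSpace.unbounded_univ ℝ E hGb⟩

theorem ball_boundaryDist_subset (hG : IsOpen G) (hx : x ∈ G) :
    Metric.ball x (boundaryDist G x) ⊆ G := by
  rcases (boundaryDist_nonneg (G := G) (x := x)).eq_or_lt' with h0 | hpos
  · simp [h0]
  refine (convex_ball x _).isPreconnected.subset_of_closure_inter_subset hG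
    ⟨x, Metric.mem_ball_self hpos, hx⟩ ?_
  rintro y ⟨hy_closure, hy_ball⟩
  by_contra hy
  have hy_frontier : y ∈ frontier G := hG.frontier_eq ▸ ⟨hy_closure, hy⟩
  exact (Metric.mem_ball'.1 hy_ball).not_ge (Metric.infDist_le_dist_of_mem hy_frontier)

theorem whitneyBall_subset (hG : IsOpen G) (hx : x ∈ G) : whitneyBall G x ⊆ G :=
  (Metric.ball_subset_ball (half_le_self boundaryDist_nonneg)).trans
    (ball_boundaryDist_subset hG hx)

end BoundaryDistanceNormed

section ComparisonOfConstants

variable {α F : Type*} [MeasurableSpace α] [NormedAddCommGroup F] {μ : Measure α} {u : α → F}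
  {q : ℝ}

theorem enorm_sub_rpow_le_two_rpow_mul (hq : 1 ≤ q) (a b c : F) :
    ‖a - c‖ₑ ^ q ≤ 2 ^ (q - 1) * (‖a - b‖ₑ ^ q + ‖b - c‖ₑ ^ q) := by
  refine le_trans ?_ (ENNReal.rpow_add_le_mul_rpow_add_rpow _ _ hq)
  rw [← sub_add_sub_cancel a b c]
  gcongr
  exact enorm_add_le _ _

theorem two_rpow_sub_one_ne_top (hq : 1 ≤ q) : (2 : ℝ≥0∞) ^ (q - 1) ≠ ⊤ :=
  ENNReal.rpow_ne_top_of_nonneg (by linarith) (by simp)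

theorem aemeasurable_enorm_sub_const_rpow (hu : AEStronglyMeasurable u μ) (a : F) :
    AEMeasurable (fun y => ‖u y - a‖ₑ ^ q) μ :=
  (hu.sub aestronglyMeasurable_const).enorm.pow_const q

theorem enorm_sub_rpow_mul_measure_univ_le (hq : 1 ≤ q) (hu : AEStronglyMeasurable u μ) (a b : F) :
    ‖a - b‖ₑ ^ q * μ Set.univ ≤
      2 ^ (q - 1) * (∫⁻ y, ‖u y - a‖ₑ ^ q ∂μ + ∫⁻ y, ‖u y - b‖ₑ ^ q ∂μ) := by
  rw [← lintegral_const, ← lintegral_add_left' (aemeasurable_enorm_sub_const_rpow hu a),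
    ← lintegral_const_mul' _ _ (two_rpow_sub_one_ne_top hq)]
  gcongr with y
  rw [enorm_sub_rev (u y) a]
  exact enorm_sub_rpow_le_two_rpow_mul hq _ _ _

theorem lintegral_enorm_sub_rpow_le_add (hq : 1 ≤ q) (hu : AEStronglyMeasurable u μ) (a b : F) :
    ∫⁻ y, ‖u y - b‖ₑ ^ q ∂μ ≤
      2 ^ (q - 1) * (∫⁻ y, ‖u y - a‖ₑ ^ q ∂μ + ‖a - b‖ₑ ^ q * μ Set.univ) := by
  rw [← lintegral_const, ← lintegral_add_left' (aemeasurable_enorm_sub_const_rpow hu a),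
    ← lintegral_const_mul' _ _ (two_rpow_sub_one_ne_top hq)]
  gcongr with y
  exact enorm_sub_rpow_le_two_rpow_mul hq _ _ _

theorem enorm_sub_rpow_le_sum_range (hq : 1 ≤ q) {M : ℕ} {c : ℕ → F} {a : ℕ → ℝ≥0∞} {C : ℝ≥0∞}
    (h : ∀ k < M, ‖c k - c (k + 1)‖ₑ ^ q ≤ C * (a k + a (k + 1))) :
    ‖c 0 - c M‖ₑ ^ q ≤ 2 * C * (M + 1 : ℝ≥0∞) ^ (q - 1) * ∑ k ∈ Finset.range (M + 1), a k := by
  have telescope : ‖c 0 - c M‖ₑ ≤ ∑ k ∈ Finset.range M, ‖c k - c (k + 1)‖ₑ := by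
    rw [← Finset.sum_range_sub' c M]
    exact enorm_sum_le _ _
  calc ‖c 0 - c M‖ₑ ^ q ≤ (∑ k ∈ Finset.range M, ‖c k - c (k + 1)‖ₑ) ^ q := by gcongr
    _ ≤ (M : ℝ≥0∞) ^ (q - 1) * ∑ k ∈ Finset.range M, ‖c k - c (k + 1)‖ₑ ^ q := by
        simpa using ENNReal.rpow_sum_le_const_mul_sum_rpow (Finset.range M)
          (fun k => ‖c k - c (k + 1)‖ₑ) hq
    _ ≤ (M + 1 : ℝ≥0∞) ^ (q - 1) * ∑ k ∈ Finset.range M, C * (a k + a (k + 1)) := by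
        gcongr with k hk
        · exact le_self_add
        · exact h k (Finset.mem_range.1 hk)
    _ = (M + 1 : ℝ≥0∞) ^ (q - 1) *
          (C * (∑ k ∈ Finset.range M, a k + ∑ k ∈ Finset.range M, a (k + 1))) := by
        rw [← Finset.mul_sum, Finset.sum_add_distrib]
    _ ≤ (M + 1 : ℝ≥0∞) ^ (q - 1) *
          (C * (∑ k ∈ Finset.range (M + 1), a k + ∑ k ∈ Finset.range (M + 1), a k)) := by
        gcongr
        · exact M.le_succ
        · exact (Finset.sum_range_succ' a M).symm ▸ le_self_add
    _ = 2 * C * (M + 1 : ℝ≥0∞) ^ (q - 1) * ∑ k ∈ Finset.range (M + 1), a k := by ring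

end ComparisonOfConstants

section LocalApproximation

variable {E F : Type*} [NormedAddCommGroup E] [NormedSpace ℝ E] [MeasurableSpace E]
  [NormedAddCommGroup F] [NormedSpace ℝ F] {μ : Measure E} {G : Set E} {q : ℝ} {u : E → F}

/-- The scale invariant `q`-energy `δ(z) ^ (q - n) * ∫ ‖∇u‖ ^ q` of `u` on the Whitney ball of
`z`, where `n` is the dimension and `δ(z)` the boundary distance. -/
noncomputable def scaledEnergy (μ : Measure E) (G : Set E) (q : ℝ) (u : E → F) (z : E) : ℝ≥0∞ :=
  ENNReal.ofReal (boundaryDist G z) ^ (q - finrank ℝ E) *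
    ∫⁻ y in whitneyBall G z, ‖fderiv ℝ u y‖ₑ ^ q ∂μ

/-- `m z` is a constant which approximates `u` on the Whitney ball of `z` as well as the
Poincaré inequality on that ball predicts. -/
def IsLocalApprox (μ : Measure E) (G : Set E) (q : ℝ) (u m : E → F) : Prop :=
  ∀ z ∈ G, ∫⁻ y in whitneyBall G z, ‖u y - m z‖ₑ ^ q ∂μ ≤
    2 ^ finrank ℝ E * (ENNReal.ofReal (boundaryDist G z) ^ finrank ℝ E * scaledEnergy μ G q u z)

theorem ofReal_pow_mul_scaledEnergy {z : E} (hz : 0 < boundaryDist G z) :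
    ENNReal.ofReal (boundaryDist G z) ^ finrank ℝ E * scaledEnergy μ G q u z =
      ENNReal.ofReal (boundaryDist G z) ^ q * ∫⁻ y in whitneyBall G z, ‖fderiv ℝ u y‖ₑ ^ q ∂μ := by
  rw [scaledEnergy, ← mul_assoc, ← ENNReal.rpow_natCast,
    ← ENNReal.rpow_add _ _ (ENNReal.ofReal_pos.2 hz).ne' ENNReal.ofReal_ne_top, add_sub_cancel]

/-- The constant in the comparison of the local approximations at neighbouring points. -/
noncomputable def neighbourConst (μ : Measure E) (q : ℝ) : ℝ≥0∞ :=
  2 ^ (q - 1) * 16 ^ finrank ℝ E * (μ (Metric.ball 0 1))⁻¹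

theorem neighbourConst_ne_top [μ.IsOpenPosMeasure] (hq : 1 ≤ q) : neighbourConst μ q ≠ ⊤ :=
  ENNReal.mul_ne_top (ENNReal.mul_ne_top (two_rpow_sub_one_ne_top hq) (by finiteness))
    (ENNReal.inv_ne_top.2 (Metric.measure_ball_pos μ 0 one_pos).ne')

variable {m : E → F} [BorelSpace E] [FiniteDimensional ℝ E]

theorem IsLocalApprox.enorm_sub_rpow_mul_measure_ball_le (hm : IsLocalApprox μ G q u m)
    (hG : IsOpen G) (hq : 1 ≤ q) (hu : DifferentiableOn ℝ u G) {z z' : E} (hz : z ∈ G)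
    (hz' : z' ∈ G) (hzz' : dist z z' ≤ boundaryDist G z / 8) :
    ‖m z - m z'‖ₑ ^ q * μ (Metric.ball z (boundaryDist G z / 4)) ≤
      2 ^ (q - 1) * (4 ^ finrank ℝ E * ENNReal.ofReal (boundaryDist G z) ^ finrank ℝ E *
        (scaledEnergy μ G q u z + scaledEnergy μ G q u z')) := by
  have hδ : boundaryDist G z' ≤ 2 * boundaryDist G z := by
    linarith [boundaryDist_le_add_dist G z' z, dist_comm z z',
      boundaryDist_nonneg (G := G) (x := z)]
  have hsub : Metric.ball z (boundaryDist G z / 4) ⊆ whitneyBall G z :=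
    Metric.ball_subset_ball (by linarith [boundaryDist_nonneg (G := G) (x := z)])
  have hsub' : Metric.ball z (boundaryDist G z / 4) ⊆ whitneyBall G z' :=
    Metric.ball_subset_ball' (by linarith [boundaryDist_le_add_dist G z z'])
  have hum : AEStronglyMeasurable u (μ.restrict (Metric.ball z (boundaryDist G z / 4))) :=
    (hu.continuousOn.mono (hsub.trans (whitneyBall_subset hG hz))).aestronglyMeasurable
      Metric.isOpen_ball.measurableSet
  rw [← Measure.restrict_apply_univ]
  refine (enorm_sub_rpow_mul_measure_univ_le hq hum _ _).trans ?_
  gcongr 2 ^ (q - 1) * ?_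
  calc (∫⁻ y in Metric.ball z (boundaryDist G z / 4), ‖u y - m z‖ₑ ^ q ∂μ) +
        ∫⁻ y in Metric.ball z (boundaryDist G z / 4), ‖u y - m z'‖ₑ ^ q ∂μ
      ≤ 2 ^ finrank ℝ E *
          (ENNReal.ofReal (boundaryDist G z) ^ finrank ℝ E * scaledEnergy μ G q u z) +
        2 ^ finrank ℝ E *
          (ENNReal.ofReal (boundaryDist G z') ^ finrank ℝ E * scaledEnergy μ G q u z') :=
        add_le_add ((lintegral_mono_set hsub).trans (hm z hz))
          ((lintegral_mono_set hsub').trans (hm z' hz'))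
    _ ≤ 2 ^ finrank ℝ E * (ENNReal.ofReal (2 * boundaryDist G z) ^ finrank ℝ E *
          scaledEnergy μ G q u z) +
        2 ^ finrank ℝ E * (ENNReal.ofReal (2 * boundaryDist G z) ^ finrank ℝ E *
          scaledEnergy μ G q u z') := by
        gcongr
        linarith [boundaryDist_nonneg (G := G) (x := z)]
    _ = 4 ^ finrank ℝ E * ENNReal.ofReal (boundaryDist G z) ^ finrank ℝ E *
          (scaledEnergy μ G q u z + scaledEnergy μ G q u z') := by
        rw [ENNReal.ofReal_mul zero_le_two, ENNReal.ofReal_ofNat,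
          show (4 : ℝ≥0∞) = 2 * 2 by norm_num, mul_pow, mul_pow]
        ring

variable [μ.IsAddHaarMeasure]

theorem exists_isLocalApprox [CompleteSpace F] (hG : IsOpen G) (hfr : (frontier G).Nonempty)
    (hq : 1 ≤ q) (hu : DifferentiableOn ℝ u G) : ∃ m, IsLocalApprox μ G q u m := by
  have local_const : ∀ z ∈ G, ∃ m, ∫⁻ y in whitneyBall G z, ‖u y - m‖ₑ ^ q ∂μ ≤
      2 ^ finrank ℝ E *
        (ENNReal.ofReal (boundaryDist G z) ^ finrank ℝ E * scaledEnergy μ G q u z) := by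
    intro z hz
    have hδ := boundaryDist_pos hG hfr hz
    obtain ⟨m, hm⟩ := exists_lintegral_enorm_sub_rpow_le_of_convex (μ := μ)
      isOpen_whitneyBall.measurableSet (convex_ball z _)
      (fun y hy => hu.differentiableAt (hG.mem_nhds (whitneyBall_subset hG hz hy))) hq
      (fun x hx y hy => by
        rw [← ofReal_norm, ← dist_eq_norm]
        exact ENNReal.ofReal_le_ofReal (dist_le_of_mem_whitneyBall hx hy)) ENNReal.ofReal_ne_top
      (Metric.measure_ball_pos μ z (half_pos hδ)).ne' measure_ball_lt_top.ne
    exact ⟨m, hm.trans_eq (by rw [ofReal_pow_mul_scaledEnergy hδ, mul_left_comm])⟩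
  choose! m hm using local_const
  exact ⟨m, hm⟩

theorem measure_ball_div_four (z : E) {r : ℝ} (hr : 0 < r) :
    μ (Metric.ball z (r / 4)) =
      ENNReal.ofReal r ^ finrank ℝ E * ((4 ^ finrank ℝ E)⁻¹ * μ (Metric.ball 0 1)) := by
  rw [Measure.addHaar_ball_of_pos _ _ (by linarith), div_pow,
    ENNReal.ofReal_div_of_pos (by positivity), ENNReal.ofReal_pow hr.le, div_eq_mul_inv,
    ENNReal.ofReal_pow zero_le_four, ENNReal.ofReal_ofNat, mul_assoc]

theorem IsLocalApprox.enorm_sub_rpow_le (hm : IsLocalApprox μ G q u m) (hG : IsOpen G)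
    (hfr : (frontier G).Nonempty) (hq : 1 ≤ q) (hu : DifferentiableOn ℝ u G) {z z' : E}
    (hz : z ∈ G) (hz' : z' ∈ G) (hzz' : dist z z' ≤ boundaryDist G z / 8) :
    ‖m z - m z'‖ₑ ^ q ≤
      neighbourConst μ q * (scaledEnergy μ G q u z + scaledEnergy μ G q u z') := by
  have hδ := boundaryDist_pos hG hfr hz
  have hv0 : μ (Metric.ball 0 1) ≠ 0 := (Metric.measure_ball_pos μ 0 one_pos).ne'
  have hvt : μ (Metric.ball 0 1) ≠ ⊤ := measure_ball_lt_top.ne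
  have h4 : (4 : ℝ≥0∞) ^ finrank ℝ E * (4 ^ finrank ℝ E)⁻¹ = 1 :=
    ENNReal.mul_inv_cancel (by positivity) (by finiteness)
  refine (ENNReal.mul_le_mul_iff_left (Metric.measure_ball_pos μ z (by linarith)).ne'
    measure_ball_lt_top.ne).1
    ((hm.enorm_sub_rpow_mul_measure_ball_le hG hq hu hz hz' hzz').trans_eq ?_)
  rw [measure_ball_div_four z hδ, neighbourConst, show (16 : ℝ≥0∞) = 4 * 4 by norm_num, mul_pow]
  calc _ = 2 ^ (q - 1) * (4 ^ finrank ℝ E * ENNReal.ofReal (boundaryDist G z) ^ finrank ℝ E *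
          (scaledEnergy μ G q u z + scaledEnergy μ G q u z')) *
          ((4 ^ finrank ℝ E * (4 ^ finrank ℝ E)⁻¹) *
            ((μ (Metric.ball 0 1))⁻¹ * μ (Metric.ball 0 1))) := by
        rw [h4, ENNReal.inv_mul_cancel hv0 hvt, one_mul, mul_one]
    _ = _ := by ring

theorem IsLocalApprox.lintegral_closedBall_le (hm : IsLocalApprox μ G q u m) (hG : IsOpen G)
    (hfr : (frontier G).Nonempty) (hq : 1 ≤ q) (hu : DifferentiableOn ℝ u G) {M : ℕ} {z : ℕ → E}
    (hz : ∀ k ≤ M, z k ∈ G) (hzz : ∀ k < M, dist (z k) (z (k + 1)) ≤ boundaryDist G (z k) / 8) :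
    ∫⁻ y in Metric.closedBall (z 0) (boundaryDist G (z 0) / 25), ‖u y - m (z M)‖ₑ ^ q ∂μ ≤
      2 ^ (q - 1) * (2 ^ finrank ℝ E + 2 * neighbourConst μ q * μ (Metric.ball 0 1)) *
        (ENNReal.ofReal (boundaryDist G (z 0)) ^ finrank ℝ E * (M + 1 : ℝ≥0∞) ^ (q - 1) *
          ∑ k ∈ Finset.range (M + 1), scaledEnergy μ G q u (z k)) := by
  set B := Metric.closedBall (z 0) (boundaryDist G (z 0) / 25)
  set Δ := ENNReal.ofReal (boundaryDist G (z 0)) ^ finrank ℝ E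
  set N : ℝ≥0∞ := (M + 1 : ℝ≥0∞) ^ (q - 1)
  set S := ∑ k ∈ Finset.range (M + 1), scaledEnergy μ G q u (z k)
  have hδ := boundaryDist_pos hG hfr (hz 0 M.zero_le)
  have hB : B ⊆ whitneyBall G (z 0) := closedBall_subset_whitneyBall (by linarith)
  have hum : AEStronglyMeasurable u (μ.restrict B) :=
    (hu.continuousOn.mono (hB.trans (whitneyBall_subset hG (hz 0 M.zero_le)))).aestronglyMeasurable
      Metric.isClosed_closedBall.measurableSet
  have hμB : μ B ≤ Δ * μ (Metric.ball 0 1) := by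
    rw [Measure.addHaar_closedBall _ _ (by positivity)]
    simp only [Δ, ← ENNReal.ofReal_pow hδ.le]
    gcongr
    linarith
  have hN : 1 ≤ N := by
    simpa [N] using ENNReal.rpow_le_rpow (z := q - 1) (le_add_self : (1 : ℝ≥0∞) ≤ M + 1)
      (by linarith)
  have local_le : ∫⁻ y in B, ‖u y - m (z 0)‖ₑ ^ q ∂μ ≤ 2 ^ finrank ℝ E * (Δ * N * S) :=
    calc _ ≤ 2 ^ finrank ℝ E * (Δ * 1 * scaledEnergy μ G q u (z 0)) := by
          rw [mul_one]; exact (lintegral_mono_set hB).trans (hm _ (hz 0 M.zero_le))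
      _ ≤ 2 ^ finrank ℝ E * (Δ * N * S) := by
          gcongr
          exact Finset.single_le_sum (f := fun k => scaledEnergy μ G q u (z k))
            (fun _ _ => zero_le) (by simp)
  have chain_le : ‖m (z 0) - m (z M)‖ₑ ^ q ≤ 2 * neighbourConst μ q * N * S :=
    enorm_sub_rpow_le_sum_range hq (c := fun k => m (z k)) fun k hk =>
      hm.enorm_sub_rpow_le hG hfr hq hu (hz k hk.le) (hz (k + 1) hk) (hzz k hk)
  calc ∫⁻ y in B, ‖u y - m (z M)‖ₑ ^ q ∂μ
      ≤ 2 ^ (q - 1) * (∫⁻ y in B, ‖u y - m (z 0)‖ₑ ^ q ∂μ + ‖m (z 0) - m (z M)‖ₑ ^ q * μ B) := by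
        simpa using lintegral_enorm_sub_rpow_le_add hq hum (m (z 0)) (m (z M))
    _ ≤ 2 ^ (q - 1) * (2 ^ finrank ℝ E * (Δ * N * S) +
          (2 * neighbourConst μ q * N * S) * (Δ * μ (Metric.ball 0 1))) := by gcongr
    _ = _ := by ring

end LocalApproximation

section QuasihyperbolicCurves

variable {X : Type*} [PseudoMetricSpace X] {G : Set X} {x y z : X} {L L' : ℝ} {γ γ' : ℝ → X}

/-- `γ`, restricted to `[0, L]`, is a `1`-Lipschitz curve in `G` from `x` to `y`. The curve is
required to stay in `G` for all times, which makes `1 / dist(γ t, ∂G)` continuous on all of `ℝ`. -/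
structure IsQhCurve (G : Set X) (x y : X) (L : ℝ) (γ : ℝ → X) : Prop where
  nonneg : 0 ≤ L
  lipschitz : LipschitzWith 1 γ
  source : γ 0 = x
  target : γ L = y
  mem : ∀ t, γ t ∈ G

/-- The quasihyperbolic length of `γ` between the times `a` and `b`. -/
noncomputable def qhLength (G : Set X) (γ : ℝ → X) (a b : ℝ) : ℝ :=
  ∫ t in a..b, 1 / boundaryDist G (γ t)

theorem qhLength_nonneg {a b : ℝ} (hab : a ≤ b) : 0 ≤ qhLength G γ a b :=
  intervalIntegral.integral_nonneg hab fun _ _ => one_div_nonneg.2 boundaryDist_nonneg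

theorem qhLength_congr {a b : ℝ} (hab : a ≤ b) (h : Set.EqOn γ γ' (Set.Icc a b)) :
    qhLength G γ a b = qhLength G γ' a b :=
  intervalIntegral.integral_congr fun t ht => by
    simp only [h (Set.uIcc_of_le hab ▸ ht)]

theorem exists_isQhCurve_eqOn_Icc (hL : 0 ≤ L) (hγ : LipschitzWith 1 γ) (hx : γ 0 = x)
    (hy : γ L = y) (hmem : ∀ t ∈ Set.Icc 0 L, γ t ∈ G) :
    ∃ γ', IsQhCurve G x y L γ' ∧ Set.EqOn γ' γ (Set.Icc 0 L) := by
  have hclamp : Set.EqOn (fun t => γ (max 0 (min t L))) γ (Set.Icc 0 L) := fun t ht => by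
    simp [ht.1, ht.2]
  refine ⟨fun t => γ (max 0 (min t L)), ⟨hL, ?_, ?_, ?_, fun t => hmem _ ?_⟩, hclamp⟩
  · simpa only [mul_one] using! hγ.comp ((LipschitzWith.id.min_const L).const_max 0)
  · exact (hclamp ⟨le_rfl, hL⟩).trans hx
  · exact (hclamp ⟨hL, le_rfl⟩).trans hy
  · exact ⟨le_max_left _ _, max_le hL (min_le_right _ _)⟩

theorem lipschitzWith_ite_le {K : NNReal} {a : ℝ} (hγ : LipschitzWith K γ)
    (hγ' : LipschitzWith K γ') (ha : γ a = γ' a) :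
    LipschitzWith K fun t => if t ≤ a then γ t else γ' t := by
  refine LipschitzWith.of_dist_le_mul fun s t => ?_
  wlog hst : s ≤ t generalizing s t
  · rw [dist_comm, dist_comm s]
    exact this t s (le_of_not_ge hst)
  by_cases hs : s ≤ a <;> by_cases ht : t ≤ a
  · simpa only [hs, ht, if_true] using hγ.dist_le_mul s t
  · rw [if_pos hs, if_neg ht]
    rw [not_le] at ht
    calc dist (γ s) (γ' t) ≤ dist (γ s) (γ a) + dist (γ' a) (γ' t) := ha ▸ dist_triangle _ _ _
      _ ≤ K * dist s a + K * dist a t := add_le_add (hγ.dist_le_mul _ _) (hγ'.dist_le_mul _ _)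
      _ = K * dist s t := by
        rw [Real.dist_eq, Real.dist_eq, Real.dist_eq, abs_of_nonpos (by linarith),
          abs_of_nonpos (by linarith), abs_of_nonpos (by linarith)]
        ring
  · exact absurd (hst.trans ht) hs
  · simpa only [hs, ht, if_false] using hγ'.dist_le_mul s t

namespace IsQhCurve

theorem dist_le (h : IsQhCurve G x y L γ) (s t : ℝ) : dist (γ s) (γ t) ≤ |s - t| := by
  simpa [Real.dist_eq] using h.lipschitz.dist_le_mul s t

theorem trans (h : IsQhCurve G x y L γ) (h' : IsQhCurve G y z L' γ') :
    IsQhCurve G x z (L + L') fun t => if t ≤ L then γ t else γ' (t - L) where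
  nonneg := add_nonneg h.nonneg h'.nonneg
  lipschitz := by
    have hshift : LipschitzWith 1 fun t => γ' (t - L) := by
      simpa only [mul_one] using! h'.lipschitz.comp (IsometryEquiv.subRight L).isometry.lipschitz
    exact lipschitzWith_ite_le h.lipschitz hshift (by simp [h.target, h'.source])
  source := by simp [h.nonneg, h.source]
  target := by
    rcases h'.nonneg.eq_or_lt with rfl | hpos
    · simp [h.target, ← h'.source, ← h'.target]
    · simp [hpos, h'.target]
  mem t := by
    split_ifs
    exacts [h.mem t, h'.mem _]

theorem continuous_one_div_boundaryDist (h : IsQhCurve G x y L γ) (hG : IsOpen G)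
    (hfr : (frontier G).Nonempty) : Continuous fun t => 1 / boundaryDist G (γ t) :=
  continuous_const.div ((continuous_boundaryDist G).comp h.lipschitz.continuous) fun t =>
    (boundaryDist_pos hG hfr (h.mem t)).ne'

theorem qhLength_add_qhLength (h : IsQhCurve G x y L γ) (hG : IsOpen G)
    (hfr : (frontier G).Nonempty) (a b c : ℝ) :
    qhLength G γ a b + qhLength G γ b c = qhLength G γ a c :=
  have hcont := h.continuous_one_div_boundaryDist hG hfr
  intervalIntegral.integral_add_adjacent_intervals (hcont.intervalIntegrable _ _)
    (hcont.intervalIntegrable _ _)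

theorem qhLength_trans (h : IsQhCurve G x y L γ) (h' : IsQhCurve G y z L' γ') (hG : IsOpen G)
    (hfr : (frontier G).Nonempty) :
    qhLength G (fun t => if t ≤ L then γ t else γ' (t - L)) 0 (L + L') =
      qhLength G γ 0 L + qhLength G γ' 0 L' := by
  rw [← (h.trans h').qhLength_add_qhLength hG hfr 0 L]
  congr 1
  · exact qhLength_congr h.nonneg fun t ht => if_pos ht.2
  · have hshift : qhLength G (fun t => γ' (t - L)) L (L + L') = qhLength G γ' 0 L' := by
      simpa [qhLength] using intervalIntegral.integral_comp_sub_right (a := L) (b := L + L')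
        (fun t => 1 / boundaryDist G (γ' t)) L
    rw [← hshift]
    refine qhLength_congr (le_add_of_nonneg_right h'.nonneg) fun t ht => ?_
    rcases ht.1.eq_or_lt with rfl | hlt
    · simp [h.target, h'.source]
    · exact if_neg hlt.not_ge

theorem initial (h : IsQhCurve G x y L γ) {s : ℝ} (hs : 0 ≤ s) : IsQhCurve G x (γ s) s γ :=
  ⟨hs, h.lipschitz, h.source, rfl, h.mem⟩

/- Since `dist(γ τ, ∂G) ≤ dist(γ s, ∂G) + (τ - s)`, the length is at least
`log (1 + (t - s) / dist(γ s, ∂G))`. -/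
theorem sub_le_boundaryDist_mul (h : IsQhCurve G x y L γ) (hG : IsOpen G)
    (hfr : (frontier G).Nonempty) {s t : ℝ} (hst : s ≤ t) :
    t - s ≤ boundaryDist G (γ s) * (Real.exp (qhLength G γ s t) - 1) := by
  set a := boundaryDist G (γ s)
  have ha : 0 < a := boundaryDist_pos hG hfr (h.mem s)
  have hpos : ∀ τ ∈ Set.Icc s t, 0 < a + (τ - s) := fun τ hτ => by linarith [hτ.1]
  have hcont : ContinuousOn (fun τ => 1 / (a + (τ - s))) (Set.uIcc s t) := by
    rw [Set.uIcc_of_le hst]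
    exact continuousOn_const.div (by fun_prop) fun τ hτ => (hpos τ hτ).ne'
  have hlog : ∫ τ in s..t, 1 / (a + (τ - s)) = Real.log ((a + (t - s)) / a) := by
    rw [intervalIntegral.integral_eq_sub_of_hasDerivAt (f := fun τ => Real.log (a + (τ - s)))
      (fun τ hτ => ?_) hcont.intervalIntegrable, sub_self, add_zero,
      Real.log_div (hpos t ⟨hst, le_rfl⟩).ne' ha.ne']
    exact (((hasDerivAt_id τ).sub_const s).const_add a).log
      (hpos τ (Set.uIcc_of_le hst ▸ hτ)).ne'
  have hle : Real.log ((a + (t - s)) / a) ≤ qhLength G γ s t := by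
    rw [← hlog]
    refine intervalIntegral.integral_mono_on hst hcont.intervalIntegrable
      ((h.continuous_one_div_boundaryDist hG hfr).intervalIntegrable _ _) fun τ hτ => ?_
    refine one_div_le_one_div_of_le (boundaryDist_pos hG hfr (h.mem τ)) ?_
    have hdist := h.dist_le τ s
    rw [abs_of_nonneg (sub_nonneg.2 hτ.1)] at hdist
    exact (boundaryDist_le_add_dist G _ _).trans (by gcongr)
  rw [Real.log_le_iff_le_exp (div_pos (hpos t ⟨hst, le_rfl⟩) ha), div_le_iff₀ ha] at hle
  linarith

end IsQhCurve

end QuasihyperbolicCurves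

section ExistenceOfCurves

variable {E : Type*} [NormedAddCommGroup E] [NormedSpace ℝ E] {G : Set E} {x y : E}

theorem exists_isQhCurve_of_convex {s : Set E} (hs : Convex ℝ s) (hsG : s ⊆ G) (hx : x ∈ s)
    (hy : y ∈ s) : ∃ L γ, IsQhCurve G x y L γ := by
  have hlip : LipschitzWith 1 fun t : ℝ => x + (t / ‖y - x‖) • (y - x) := by
    refine LipschitzWith.of_dist_le_mul fun t t' => ?_
    rw [dist_add_left, dist_eq_norm, ← sub_smul, norm_smul, ← sub_div, norm_div, norm_norm,
      NNReal.coe_one, one_mul, Real.dist_eq, ← Real.norm_eq_abs, div_mul_eq_mul_div]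
    exact div_le_of_le_mul₀ (norm_nonneg _) (norm_nonneg _) le_rfl
  have hend : x + (‖y - x‖ / ‖y - x‖) • (y - x) = y := by
    rcases eq_or_ne y x with rfl | hne
    · simp
    · rw [div_self (norm_ne_zero_iff.2 (sub_ne_zero.2 hne)), one_smul, add_sub_cancel]
  obtain ⟨γ, hγ, -⟩ := exists_isQhCurve_eqOn_Icc (norm_nonneg (y - x)) hlip (x := x) (by simp) hend
    fun t ht => hsG (hs.add_smul_sub_mem hx hy
      ⟨div_nonneg ht.1 (norm_nonneg _), div_le_one_of_le₀ ht.2 (norm_nonneg _)⟩)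
  exact ⟨_, γ, hγ⟩

theorem exists_isQhCurve (hG : IsOpen G) (hGc : IsPreconnected G) (hx : x ∈ G) (hy : y ∈ G) :
    ∃ L γ, IsQhCurve G x y L γ := by
  refine hGc.induction₂' (fun x y => ∃ L γ, IsQhCurve G x y L γ) (fun x hx => ?_)
    (fun x y z _ _ _ ⟨_, _, h⟩ ⟨_, _, h'⟩ => ⟨_, _, h.trans h'⟩) hx hy
  obtain ⟨r, hr, hball⟩ := Metric.isOpen_iff.1 hG x hx
  filter_upwards [mem_nhdsWithin_of_mem_nhds (Metric.ball_mem_nhds x hr)] with y hy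
  exact ⟨exists_isQhCurve_of_convex (convex_ball x r) hball (Metric.mem_ball_self hr) hy,
    exists_isQhCurve_of_convex (convex_ball x r) hball hy (Metric.mem_ball_self hr)⟩

end ExistenceOfCurves

section QuasihyperbolicDistance

variable {n : ℕ} {G : Set (EuclideanSpace ℝ (Fin n))} {x y : EuclideanSpace ℝ (Fin n)}
  {L : ℝ} {γ : ℝ → EuclideanSpace ℝ (Fin n)}

theorem qhDist_eq_sInf (G : Set (EuclideanSpace ℝ (Fin n))) (x y : EuclideanSpace ℝ (Fin n)) :
    qhDist G x y = sInf {v | ∃ L γ, IsQhCurve G x y L γ ∧ v = qhLength G γ 0 L} := by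
  refine congrArg sInf (Set.ext fun v => ⟨?_, ?_⟩)
  · rintro ⟨L, γ, hL, hlip, hx, hy, hmem, rfl⟩
    obtain ⟨γ', hγ', heq⟩ := exists_isQhCurve_eqOn_Icc hL hlip hx hy hmem
    exact ⟨L, γ', hγ', (qhLength_congr hL heq).symm⟩
  · rintro ⟨L, γ, h, rfl⟩
    exact ⟨L, γ, h.nonneg, h.lipschitz, h.source, h.target, fun t _ => h.mem t, rfl⟩

theorem IsQhCurve.qhDist_le (h : IsQhCurve G x y L γ) : qhDist G x y ≤ qhLength G γ 0 L := by
  rw [qhDist_eq_sInf]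
  refine csInf_le ⟨0, ?_⟩ ⟨L, γ, h, rfl⟩
  rintro v ⟨L', γ', h', rfl⟩
  exact qhLength_nonneg h'.nonneg

theorem IsQhCurve.qhDist_le_qhLength_add (h : IsQhCurve G x y L γ) (hG : IsOpen G)
    (hfr : (frontier G).Nonempty) (hGc : IsPreconnected G) {s : ℝ} (hs : 0 ≤ s) :
    qhDist G x y ≤ qhLength G γ 0 s + qhDist G (γ s) y := by
  rw [← sub_le_iff_le_add', qhDist_eq_sInf G (γ s)]
  obtain ⟨L₁, γ₁, h₁⟩ := exists_isQhCurve hG hGc (h.mem s) (h.target ▸ h.mem L)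
  refine le_csInf ⟨_, L₁, γ₁, h₁, rfl⟩ ?_
  rintro v ⟨L', γ', h', rfl⟩
  rw [sub_le_iff_le_add', ← (h.initial hs).qhLength_trans h' hG hfr]
  exact ((h.initial hs).trans h').qhDist_le

/- A curve that is optimal up to an error of `1` has tails that are optimal up to the same
error. -/
theorem QHBCWith.exists_isQhCurve {β c : ℝ} {x₀ : EuclideanSpace ℝ (Fin n)}
    (h : QHBCWith G β x₀ c) (hG : IsOpen G) (hfr : (frontier G).Nonempty)
    (hGc : IsPreconnected G) (hx₀ : x₀ ∈ G) (hx : x ∈ G) :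
    ∃ L γ, IsQhCurve G x x₀ L γ ∧ ∀ s, 0 ≤ s →
      qhLength G γ s L ≤ 1 / β * Real.log (1 / boundaryDist G (γ s)) + (c + 1) := by
  obtain ⟨L₁, γ₁, h₁⟩ := _root_.exists_isQhCurve hG hGc hx hx₀
  have hlt : sInf {v | ∃ L γ, IsQhCurve G x x₀ L γ ∧ v = qhLength G γ 0 L} < qhDist G x x₀ + 1 :=
    qhDist_eq_sInf G x x₀ ▸ lt_add_one _
  obtain ⟨_, ⟨L, γ, hγ, rfl⟩, hlt⟩ := exists_lt_of_csInf_lt (by exact ⟨_, L₁, γ₁, h₁, rfl⟩) hlt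
  refine ⟨L, γ, hγ, fun s hs => ?_⟩
  have htri := hγ.qhDist_le_qhLength_add hG hfr hGc hs
  have hadd := hγ.qhLength_add_qhLength hG hfr 0 s L
  have hqh : qhDist G (γ s) x₀ ≤ 1 / β * Real.log (1 / boundaryDist G (γ s)) + c :=
    h (γ s) (hγ.mem s)
  linarith

end QuasihyperbolicDistance

section WhitneyChains

theorem exists_equipartition {f : ℝ → ℝ} {a b : ℝ} (hab : a ≤ b)
    (hf : ContinuousOn f (Set.Icc a b)) (hanti : StrictAntiOn f (Set.Icc a b)) {M : ℕ}
    (hM : M ≠ 0) :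
    ∃ T : ℕ → ℝ, T 0 = a ∧ T M = b ∧ (∀ k, T k ∈ Set.Icc a b) ∧
      ∀ k < M, T k ≤ T (k + 1) ∧ f (T k) - f (T (k + 1)) = (f a - f b) / M := by
  have hM' : (0 : ℝ) < M := by positivity
  have hfab : f b ≤ f a := hanti.antitoneOn ⟨le_rfl, hab⟩ ⟨hab, le_rfl⟩ hab
  have hvalue : ∀ k : ℕ, ∃ t ∈ Set.Icc a b, f t = f a - (f a - f b) / M * (min k M : ℕ) := by
    intro k
    refine intermediate_value_Icc' hab hf ⟨?_, sub_le_self _ ?_⟩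
    · have hk : ((min k M : ℕ) : ℝ) ≤ M := Nat.cast_le.2 (min_le_right _ _)
      have : (f a - f b) / M * (min k M : ℕ) ≤ (f a - f b) / M * M :=
        mul_le_mul_of_nonneg_left hk (div_nonneg (sub_nonneg.2 hfab) hM'.le)
      rw [div_mul_cancel₀ _ hM'.ne'] at this
      linarith
    · exact mul_nonneg (div_nonneg (sub_nonneg.2 hfab) hM'.le) (Nat.cast_nonneg _)
  choose T hT hfT using hvalue
  have hstep : ∀ k < M, f (T k) - f (T (k + 1)) = (f a - f b) / M := by
    intro k hk
    rw [hfT, hfT, min_eq_left hk.le, min_eq_left (Nat.succ_le_of_lt hk)]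
    push_cast
    ring
  refine ⟨T, hanti.injOn (hT 0) ⟨le_rfl, hab⟩ ?_, hanti.injOn (hT M) ⟨hab, le_rfl⟩ ?_, hT,
    fun k hk => ⟨(hanti.le_iff_ge (hT _) (hT _)).1 (sub_nonneg.1 ?_), hstep k hk⟩⟩
  · simp [hfT]
  · rw [hfT, min_self, div_mul_cancel₀ _ hM'.ne', sub_sub_self]
  · exact hstep k hk ▸ div_nonneg (sub_nonneg.2 hfab) hM'.le

theorem le_exp_mul_exp_of_le_log {β c d k : ℝ} (hβ : 0 < β) (hd : 0 < d)
    (h : k ≤ 1 / β * Real.log (1 / d) + c) : d ≤ Real.exp (β * c) * Real.exp (-β * k) := by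
  rw [← Real.exp_add, ← Real.log_le_iff_le_exp hd]
  rw [one_div d, Real.log_inv, ← sub_le_iff_le_add, one_div_mul_eq_div, le_div_iff₀ hβ] at h
  linarith

variable {X : Type*} [PseudoMetricSpace X] {G : Set X} {x x₀ : X} {L β c : ℝ} {γ : ℝ → X}

namespace IsQhCurve

theorem hasDerivAt_qhLength (h : IsQhCurve G x x₀ L γ) (hG : IsOpen G)
    (hfr : (frontier G).Nonempty) (s : ℝ) :
    HasDerivAt (fun s => qhLength G γ s L) (-(1 / boundaryDist G (γ s))) s :=
  have hcont := h.continuous_one_div_boundaryDist hG hfr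
  intervalIntegral.integral_hasDerivAt_left (hcont.intervalIntegrable _ _)
    (hcont.stronglyMeasurableAtFilter _ _) hcont.continuousAt

/- The function `s ↦ (A / β) exp (-β k(s)) - s`, with `k(s)` the length of the tail after `s` and
`A = exp (β c)`, has derivative `A exp (-β k(s)) / dist(γ s, ∂G) - 1 ≥ 0`. -/
theorem le_mul_exp_qhLength (h : IsQhCurve G x x₀ L γ) (hG : IsOpen G)
    (hfr : (frontier G).Nonempty) (hβ : 0 < β)
    (htail : ∀ s, 0 ≤ s → qhLength G γ s L ≤ 1 / β * Real.log (1 / boundaryDist G (γ s)) + c)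
    {t : ℝ} (ht : 0 ≤ t) :
    t ≤ Real.exp (β * c) / β * Real.exp (-β * qhLength G γ t L) := by
  set k : ℝ → ℝ := fun s => qhLength G γ s L
  set A : ℝ := Real.exp (β * c)
  have hderiv : ∀ s, HasDerivAt (fun s => A / β * Real.exp (-β * k s) - s)
      (A / β * (Real.exp (-β * k s) * (-β * -(1 / boundaryDist G (γ s)))) - 1) s := fun s =>
    ((((h.hasDerivAt_qhLength hG hfr s).const_mul (-β)).exp).const_mul (A / β)).sub
      (hasDerivAt_id s)
  have hmono : MonotoneOn (fun s => A / β * Real.exp (-β * k s) - s) (Set.Icc 0 t) := by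
    refine monotoneOn_of_hasDerivWithinAt_nonneg (convex_Icc _ _)
      (fun s _ => (hderiv s).continuousAt.continuousWithinAt)
      (fun s _ => (hderiv s).hasDerivWithinAt) fun s hs => ?_
    have hpos := boundaryDist_pos hG hfr (h.mem s)
    have heq : A / β * (Real.exp (-β * k s) * (-β * -(1 / boundaryDist G (γ s)))) =
        A * Real.exp (-β * k s) / boundaryDist G (γ s) := by
      field_simp
    rw [heq, sub_nonneg, one_le_div hpos]
    exact le_exp_mul_exp_of_le_log hβ hpos (htail s (interior_subset hs).1)
  have hends := hmono ⟨le_rfl, ht⟩ ⟨ht, le_rfl⟩ ht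
  have hstart : 0 ≤ A / β * Real.exp (-β * k 0) := by positivity
  simp only [sub_zero] at hends
  linarith

theorem exp_neg_qhLength_le (h : IsQhCurve G x x₀ L γ) (hG : IsOpen G)
    (hfr : (frontier G).Nonempty) {t : ℝ} (ht : t ≤ L) :
    Real.exp (-qhLength G γ t L) ≤ (boundaryDist G x₀)⁻¹ * boundaryDist G (γ t) := by
  have hgrowth := h.sub_le_boundaryDist_mul hG hfr ht
  have hdist := h.dist_le L t
  have hδ := boundaryDist_le_add_dist G (γ L) (γ t)
  rw [h.target] at hδ hdist
  rw [abs_of_nonneg (sub_nonneg.2 ht)] at hdist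
  rw [le_inv_mul_iff₀ (boundaryDist_pos hG hfr (h.target ▸ h.mem L)), Real.exp_neg,
    mul_inv_le_iff₀ (Real.exp_pos _)]
  linarith

theorem dist_source_le (h : IsQhCurve G x x₀ L γ) (hG : IsOpen G)
    (hfr : (frontier G).Nonempty) (hβ : 0 < β)
    (htail : ∀ s, 0 ≤ s → qhLength G γ s L ≤ 1 / β * Real.log (1 / boundaryDist G (γ s)) + c)
    {t : ℝ} (ht : t ∈ Set.Icc 0 L) :
    dist x (γ t) ≤
      Real.exp (β * c) / β * (boundaryDist G x₀)⁻¹ ^ β * boundaryDist G (γ t) ^ β := by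
  have hdist := h.dist_le 0 t
  rw [h.source, zero_sub, abs_neg, abs_of_nonneg ht.1] at hdist
  have hexp : Real.exp (-β * qhLength G γ t L) ≤
      (boundaryDist G x₀)⁻¹ ^ β * boundaryDist G (γ t) ^ β := by
    rw [neg_mul_comm, mul_comm, Real.exp_mul,
      ← Real.mul_rpow (inv_nonneg.2 boundaryDist_nonneg) boundaryDist_nonneg]
    exact Real.rpow_le_rpow (Real.exp_pos _).le (h.exp_neg_qhLength_le hG hfr ht.2) hβ.le
  calc dist x (γ t) ≤ Real.exp (β * c) / β * Real.exp (-β * qhLength G γ t L) :=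
        hdist.trans (h.le_mul_exp_qhLength hG hfr hβ htail ht.1)
    _ ≤ Real.exp (β * c) / β * ((boundaryDist G x₀)⁻¹ ^ β * boundaryDist G (γ t) ^ β) := by
        gcongr
    _ = _ := (mul_assoc _ _ _).symm

theorem boundaryDist_source_rpow_le (h : IsQhCurve G x x₀ L γ) (hG : IsOpen G)
    (hfr : (frontier G).Nonempty)
    (hlen : qhLength G γ 0 L ≤ 1 / β * Real.log (1 / boundaryDist G x) + c)
    {t : ℝ} (ht : t ∈ Set.Icc 0 L) :
    boundaryDist G x ^ (1 / β) ≤ Real.exp c * (boundaryDist G x₀)⁻¹ * boundaryDist G (γ t) := by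
  have hx : 0 < boundaryDist G x := boundaryDist_pos hG hfr (h.source ▸ h.mem 0)
  have hmono : qhLength G γ t L ≤ qhLength G γ 0 L := by
    linarith [h.qhLength_add_qhLength hG hfr 0 t L, qhLength_nonneg (G := G) (γ := γ) ht.1]
  calc boundaryDist G x ^ (1 / β) ≤ Real.exp c * Real.exp (-qhLength G γ t L) := by
        rw [Real.rpow_def_of_pos hx, ← Real.exp_add, Real.exp_le_exp]
        rw [one_div (boundaryDist G x), Real.log_inv] at hlen
        linarith
    _ ≤ Real.exp c * ((boundaryDist G x₀)⁻¹ * boundaryDist G (γ t)) :=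
        mul_le_mul_of_nonneg_left (h.exp_neg_qhLength_le hG hfr ht.2) (Real.exp_pos _).le
    _ = _ := (mul_assoc _ _ _).symm

theorem dist_le_boundaryDist_div_eight (h : IsQhCurve G x x₀ L γ) (hG : IsOpen G)
    (hfr : (frontier G).Nonempty) {s t : ℝ} (hst : s ≤ t) (hlen : qhLength G γ s t ≤ 1 / 16) :
    dist (γ s) (γ t) ≤ boundaryDist G (γ s) / 8 := by
  have hexp : Real.exp (qhLength G γ s t) ≤ 1 + 1 / 8 := by
    have hinv := Real.one_sub_le_exp_neg (1 / 16)
    rw [Real.exp_neg, le_inv_comm₀ (by norm_num) (Real.exp_pos _)] at hinv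
    exact (Real.exp_le_exp.2 hlen).trans (hinv.trans (by norm_num))
  calc dist (γ s) (γ t) ≤ t - s := by
        simpa only [abs_sub_comm s, abs_of_nonneg (sub_nonneg.2 hst)] using h.dist_le s t
    _ ≤ boundaryDist G (γ s) * (Real.exp (qhLength G γ s t) - 1) :=
        h.sub_le_boundaryDist_mul hG hfr hst
    _ ≤ boundaryDist G (γ s) * (1 / 8) :=
        mul_le_mul_of_nonneg_left (by linarith) boundaryDist_nonneg
    _ = boundaryDist G (γ s) / 8 := by ring

end IsQhCurve

/-- `z 0, …, z M` is a chain of points of `G` from `x` to `x₀` with consecutive Whitney balls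
overlapping substantially. Under a `β`-quasihyperbolic boundary condition such chains exist with
`C` independent of `x`: they have logarithmic length, `x` lies in the `β`-shadow of each of their
points, and they do not approach the boundary much beyond `dist(x, ∂G) ^ (1 / β)`. -/
structure IsWhitneyChain (G : Set X) (β C : ℝ) (x x₀ : X) (M : ℕ) (z : ℕ → X) : Prop where
  source : z 0 = x
  target : z M = x₀
  mem : ∀ k, z k ∈ G
  dist_succ_le : ∀ k < M, dist (z k) (z (k + 1)) ≤ boundaryDist G (z k) / 8
  dist_source_le : ∀ k, dist x (z k) ≤ C * boundaryDist G (z k) ^ β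
  rpow_le : ∀ k, boundaryDist G x ^ (1 / β) ≤ C * boundaryDist G (z k)
  length_le : (M : ℝ) + 1 ≤ 16 / β * Real.log (1 / boundaryDist G x) + C

theorem IsQhCurve.exists_isWhitneyChain (h : IsQhCurve G x x₀ L γ) (hG : IsOpen G)
    (hfr : (frontier G).Nonempty) (hβ : 0 < β)
    (htail : ∀ s, 0 ≤ s → qhLength G γ s L ≤ 1 / β * Real.log (1 / boundaryDist G (γ s)) + c)
    {C : ℝ} (hC : Real.exp (β * c) / β * (boundaryDist G x₀)⁻¹ ^ β ≤ C)
    (hC' : Real.exp c * (boundaryDist G x₀)⁻¹ ≤ C) (hC'' : 16 * c + 3 ≤ C) :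
    ∃ M z, IsWhitneyChain G β C x x₀ M z := by
  set K := qhLength G γ 0 L
  have hK : K ≤ 1 / β * Real.log (1 / boundaryDist G x) + c := h.source ▸ htail 0 le_rfl
  have hK0 : 0 ≤ K := qhLength_nonneg h.nonneg
  set M : ℕ := ⌈16 * K⌉₊ + 1 with hM
  have hKM : K / M ≤ 1 / 16 := by
    rw [div_le_iff₀ (by positivity), hM, Nat.cast_succ]
    linarith [Nat.le_ceil (16 * K)]
  have hderiv := h.hasDerivAt_qhLength hG hfr
  have hanti : StrictAnti fun s => qhLength G γ s L := strictAnti_of_hasDerivAt_neg hderiv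
    fun s => neg_neg_of_pos (one_div_pos.2 (boundaryDist_pos hG hfr (h.mem s)))
  obtain ⟨T, hT0, hTM, hT, hstep⟩ := exists_equipartition h.nonneg
    (fun s _ => (hderiv s).continuousAt.continuousWithinAt) (hanti.strictAntiOn _)
    (Nat.succ_ne_zero ⌈16 * K⌉₊)
  refine ⟨M, γ ∘ T, ?_, ?_, fun k => h.mem _, fun k hk => ?_, fun k => ?_, fun k => ?_, ?_⟩
  · exact (congrArg γ hT0).trans h.source
  · exact (congrArg γ hTM).trans h.target
  · obtain ⟨hle, hdiff⟩ := hstep k hk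
    have hself : qhLength G γ L L = 0 := intervalIntegral.integral_same
    refine h.dist_le_boundaryDist_div_eight hG hfr hle (le_of_eq_of_le ?_ hKM)
    rw [hself, sub_zero] at hdiff
    exact (eq_sub_of_add_eq (h.qhLength_add_qhLength hG hfr _ _ L)).trans hdiff
  · exact (h.dist_source_le hG hfr hβ htail (hT k)).trans (mul_le_mul_of_nonneg_right hC
      (Real.rpow_nonneg boundaryDist_nonneg _))
  · exact (h.boundaryDist_source_rpow_le hG hfr hK (hT k)).trans
      (mul_le_mul_of_nonneg_right hC' boundaryDist_nonneg)
  · have hceil := Nat.ceil_lt_add_one (mul_nonneg (by norm_num : (0 : ℝ) ≤ 16) hK0)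
    rw [hM, Nat.cast_succ, div_eq_mul_one_div, mul_assoc]
    linarith

end WhitneyChains

theorem QHBCWith.exists_isWhitneyChain {n : ℕ} {G : Set (EuclideanSpace ℝ (Fin n))} {β c : ℝ}
    {x₀ : EuclideanSpace ℝ (Fin n)} (h : QHBCWith G β x₀ c) (hG : IsOpen G)
    (hfr : (frontier G).Nonempty) (hGc : IsPreconnected G) (hβ : 0 < β) (hx₀ : x₀ ∈ G) :
    ∃ C : ℝ, 0 < C ∧ ∀ x ∈ G, ∃ M z, IsWhitneyChain G β C x x₀ M z := by
  have hpos : 0 < boundaryDist G x₀ := boundaryDist_pos hG hfr hx₀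
  set C₁ := Real.exp (β * (c + 1)) / β * (boundaryDist G x₀)⁻¹ ^ β
  set C₂ := Real.exp (c + 1) * (boundaryDist G x₀)⁻¹
  refine ⟨max C₁ (max C₂ (16 * (c + 1) + 3)), lt_max_of_lt_left (by positivity), fun x hx => ?_⟩
  obtain ⟨L, γ, hγ, htail⟩ := h.exists_isQhCurve hG hfr hGc hx₀ hx
  exact hγ.exists_isWhitneyChain hG hfr hβ htail (le_max_left _ _)
    ((le_max_left _ _).trans (le_max_right _ _)) ((le_max_right _ _).trans (le_max_right _ _))

section LayerCake

variable {α : Type*} [MeasurableSpace α] {ν : Measure α} {f : α → ℝ} {s a T : ℝ} {K : ℝ≥0∞}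

theorem lintegral_Ioc_measure_lt_mul_rpow_lt_top [IsFiniteMeasure ν] (hs : 0 < s) (hT : 0 ≤ T) :
    ∫⁻ t in Set.Ioc 0 T, ν {x | t < f x} * ENNReal.ofReal (t ^ (s - 1)) < ⊤ := by
  have hi : IntegrableOn (fun t : ℝ => t ^ (s - 1)) (Set.Ioc 0 T) :=
    (intervalIntegrable_iff_integrableOn_Ioc_of_le hT).1
      (intervalIntegral.intervalIntegrable_rpow' (by linarith))
  calc _ ≤ ∫⁻ t in Set.Ioc 0 T, ν Set.univ * ENNReal.ofReal (t ^ (s - 1)) := by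
        gcongr; exact Set.subset_univ _
    _ = ν Set.univ * ∫⁻ t in Set.Ioc 0 T, ENNReal.ofReal (t ^ (s - 1)) :=
        lintegral_const_mul' _ _ (measure_ne_top _ _)
    _ < ⊤ := ENNReal.mul_lt_top (measure_lt_top _ _) hi.lintegral_lt_top

theorem lintegral_Ioi_measure_lt_mul_rpow_lt_top (hsa : s < a) (hK : K ≠ ⊤) (hT : 0 < T)
    (hf : ∀ t > T, ν {x | t < f x} ≤ K * ENNReal.ofReal (t ^ (-a))) :
    ∫⁻ t in Set.Ioi T, ν {x | t < f x} * ENNReal.ofReal (t ^ (s - 1)) < ⊤ := by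
  have hi : IntegrableOn (fun t : ℝ => t ^ (-a + (s - 1))) (Set.Ioi T) :=
    integrableOn_Ioi_rpow_of_lt (by linarith) hT
  calc _ ≤ ∫⁻ t in Set.Ioi T, K * ENNReal.ofReal (t ^ (-a + (s - 1))) := by
        refine setLIntegral_mono' measurableSet_Ioi fun t ht => ?_
        have ht0 : 0 < t := hT.trans ht
        rw [Real.rpow_add ht0, ENNReal.ofReal_mul (by positivity), ← mul_assoc]
        gcongr
        exact hf t ht
    _ = K * ∫⁻ t in Set.Ioi T, ENNReal.ofReal (t ^ (-a + (s - 1))) := lintegral_const_mul' _ _ hK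
    _ < ⊤ := ENNReal.mul_lt_top hK.lt_top hi.lintegral_lt_top

theorem lintegral_rpow_lt_top_of_measure_lt_le [IsFiniteMeasure ν] (hf : AEMeasurable f ν)
    (hf0 : 0 ≤ᵐ[ν] f) (hs : 0 < s) (hsa : s < a) (hK : K ≠ ⊤) (hT : 0 < T)
    (hfa : ∀ t > T, ν {x | t < f x} ≤ K * ENNReal.ofReal (t ^ (-a))) :
    ∫⁻ x, ENNReal.ofReal (f x ^ s) ∂ν < ⊤ := by
  rw [lintegral_rpow_eq_lintegral_meas_lt_mul _ hf0 hf hs, ← Set.Ioc_union_Ioi_eq_Ioi hT.le]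
  exact ENNReal.mul_lt_top ENNReal.ofReal_lt_top ((lintegral_union_le _ _ _).trans_lt
    (ENNReal.add_lt_top.2 ⟨lintegral_Ioc_measure_lt_mul_rpow_lt_top hs hT.le,
      lintegral_Ioi_measure_lt_mul_rpow_lt_top hsa hK hT hfa⟩))

end LayerCake

section MinkowskiDimension

open Filter Topology

theorem lintegral_one_div_infDist_rpow_lt_top {X : Type*} [PseudoMetricSpace X]
    [MeasurableSpace X] [OpensMeasurableSpace X] {ν : Measure X} [IsFiniteMeasure ν] {A : Set X}
    {s a : ℝ} {K : ℝ≥0∞} (hA : A.Nonempty) (hs : 0 < s) (hsa : s < a) (hK : K ≠ ⊤)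
    (hν : ∀ᶠ r in 𝓝[>] 0, ν (Metric.thickening r A) ≤ K * ENNReal.ofReal (r ^ a)) :
    ∫⁻ x, ENNReal.ofReal ((1 / Metric.infDist x A) ^ s) ∂ν < ⊤ := by
  obtain ⟨r₀, hr₀, hr⟩ := mem_nhdsGT_iff_exists_Ioo_subset.1 hν
  replace hr₀ : 0 < r₀ := hr₀
  refine lintegral_rpow_lt_top_of_measure_lt_le
    (measurable_const.div (Metric.continuous_infDist_pt A).measurable).aemeasurable
    (.of_forall fun x => div_nonneg zero_le_one Metric.infDist_nonneg) hs hsa hK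
    (one_div_pos.2 hr₀) fun t ht => ?_
  have ht0 : 0 < t := (one_div_pos.2 hr₀).trans ht
  have hlevel : {x | t < 1 / Metric.infDist x A} ⊆ Metric.thickening (1 / t) A := by
    intro x (hx : t < 1 / Metric.infDist x A)
    rw [Metric.mem_thickening_iff, ← Metric.infDist_lt_iff hA]
    exact (lt_one_div ht0 (one_div_pos.1 (ht0.trans hx))).1 hx
  calc ν {x | t < 1 / Metric.infDist x A} ≤ ν (Metric.thickening (1 / t) A) := measure_mono hlevel
    _ ≤ K * ENNReal.ofReal ((1 / t) ^ a) :=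
        hr ⟨one_div_pos.2 ht0, (one_div_lt ht0 hr₀).2 ht⟩
    _ = K * ENNReal.ofReal (t ^ (-a)) := by
        rw [one_div, Real.inv_rpow ht0.le, Real.rpow_neg ht0.le]

variable {n : ℕ} {A : Set (EuclideanSpace ℝ (Fin n))} {l : ℝ}

theorem le_of_limsup_minkowskiPrecontent_eq_top (hA : Bornology.IsBounded A)
    (h : limsup (fun r => minkowskiPrecontent n A l r) (𝓝[>] 0) = ⊤) : l ≤ n := by
  have hfin : volume (⋃ x ∈ A, Metric.ball x 1) < ⊤ := by
    rw [← Metric.thickening_eq_biUnion_ball]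
    exact hA.thickening.measure_lt_top
  by_contra! hl
  refine h.not_lt ((limsup_le_of_le (h := ?_)).trans_lt hfin)
  filter_upwards [Ioo_mem_nhdsGT one_pos] with r hr
  refine ENNReal.div_le_of_le_mul ?_
  have one_le : 1 ≤ ENNReal.ofReal (r ^ ((n : ℝ) - l)) := ENNReal.one_le_ofReal.2
    (Real.one_le_rpow_of_pos_of_le_one_of_nonpos hr.1 hr.2.le (by linarith))
  calc volume (⋃ x ∈ A, Metric.ball x r) ≤ volume (⋃ x ∈ A, Metric.ball x 1) :=
        measure_mono (Set.iUnion₂_mono fun x _ => Metric.ball_subset_ball hr.2.le)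
    _ ≤ _ := le_mul_of_one_le_right' one_le

theorem exists_eventually_volume_thickening_le (hA : Bornology.IsBounded A) (hl : 0 ≤ l)
    (h : upperMinkowskiDim n A < l) : ∃ K : ℝ≥0∞, K ≠ ⊤ ∧ ∀ᶠ r in 𝓝[>] 0,
      volume (Metric.thickening r A) ≤ K * ENNReal.ofReal (r ^ ((n : ℝ) - l)) := by
  have hlim : limsup (fun r => minkowskiPrecontent n A l r) (𝓝[>] 0) ≠ ⊤ := fun htop =>
    h.not_ge (le_csSup ⟨n, fun _ ha => le_of_limsup_minkowskiPrecontent_eq_top hA ha.2⟩ ⟨hl, htop⟩)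
  obtain ⟨K, hK, hK_top⟩ := exists_between hlim.lt_top
  refine ⟨K, hK_top.ne, ?_⟩
  filter_upwards [eventually_lt_of_limsup_lt hK, self_mem_nhdsWithin] with r hr (hr0 : 0 < r)
  have hpos := Real.rpow_pos_of_pos hr0 ((n : ℝ) - l)
  rw [Metric.thickening_eq_biUnion_ball]
  exact ((ENNReal.div_lt_iff (.inl (ENNReal.ofReal_pos.2 hpos).ne') (.inl ENNReal.ofReal_ne_top)).1
    hr).le

theorem lintegral_one_div_boundaryDist_rpow_lt_top {G : Set (EuclideanSpace ℝ (Fin n))} {s : ℝ}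
    (hGb : Bornology.IsBounded G) (hfr : (frontier G).Nonempty) (hl : 0 ≤ l)
    (hdim : upperMinkowskiDim n (frontier G) ≤ l) (hs : 0 < s) (hsl : s < n - l) :
    ∫⁻ x in G, ENNReal.ofReal ((1 / boundaryDist G x) ^ s) < ⊤ := by
  obtain ⟨l', hll', hl's⟩ := exists_between (show l < n - s by linarith)
  have : IsFiniteMeasure (volume.restrict G) := isFiniteMeasure_restrict.2 hGb.measure_lt_top.ne
  obtain ⟨K, hK, hvol⟩ := exists_eventually_volume_thickening_le
    (hGb.closure.subset frontier_subset_closure) (hl.trans hll'.le) (hdim.trans_lt hll')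
  exact lintegral_one_div_infDist_rpow_lt_top hfr hs (by linarith) hK
    (hvol.mono fun r hr => (Measure.restrict_apply_le _ _).trans hr)

end MinkowskiDimension

section WhitneyNets

/-- A Whitney net of `G`: a countable set `S` of points of `G` such that balls of radius comparable
to the boundary distance, centred in `S`, are pairwise disjoint, while somewhat larger ones
cover `G`. -/
structure IsWhitneyNet {X : Type*} [PseudoMetricSpace X] (G S : Set X) : Prop where
  subset : S ⊆ G
  countable : S.Countable
  pairwiseDisjoint : S.PairwiseDisjoint fun x => Metric.closedBall x (boundaryDist G x / 100)
  subset_iUnion : G ⊆ ⋃ x : S, Metric.closedBall (x : X) (boundaryDist G x / 25)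

theorem exists_isWhitneyNet {X : Type*} [PseudoMetricSpace X] [TopologicalSpace.SeparableSpace X]
    {G : Set X} (hG : IsOpen G) (hGb : Bornology.IsBounded G) (hfr : (frontier G).Nonempty) :
    ∃ S, IsWhitneyNet G S := by
  obtain ⟨D, -, hD⟩ := exists_boundaryDist_le hGb hfr
  obtain ⟨S, hSG, hdisj, hcov⟩ := Vitali.exists_disjoint_subfamily_covering_enlargement_closedBall G
    id (fun x => boundaryDist G x / 100) (D / 100) (fun x hx => by gcongr; exact hD x hx) 4
    (by norm_num)
  refine ⟨S, hSG, hdisj.countable_of_nonempty_interior fun x hx => ?_, hdisj, fun x hx => ?_⟩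
  · have hδ := boundaryDist_pos hG hfr (hSG hx)
    exact ⟨x, Metric.ball_subset_interior_closedBall (Metric.mem_ball_self (by positivity))⟩
  · obtain ⟨b, hb, hsub⟩ := hcov x hx
    have hδ := boundaryDist_pos hG hfr hx
    have hxb := hsub (Metric.mem_closedBall_self (by positivity))
    rw [show 4 * (boundaryDist G b / 100) = boundaryDist G b / 25 by ring] at hxb
    exact Set.mem_iUnion.2 ⟨⟨b, hb⟩, hxb⟩

theorem IsWhitneyNet.pairwise_disjoint_closedBall {X : Type*} [PseudoMetricSpace X] {G S : Set X}
    (hS : IsWhitneyNet G S) : Pairwise (Function.onFun Disjoint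
      fun i : S => Metric.closedBall (i : X) (boundaryDist G i / 100)) :=
  hS.pairwiseDisjoint.subtype

variable {E : Type*} [NormedAddCommGroup E] [NormedSpace ℝ E] [FiniteDimensional ℝ E]

theorem tsum_ofReal_radius_pow_finrank_le {ι : Type*} [Countable ι] {c : ι → E} {r : ι → ℝ} {y : E}
    {R : ℝ} (hr : ∀ i, 0 ≤ r i) (hR : 0 ≤ R)
    (hdisj : Pairwise (Function.onFun Disjoint fun i => Metric.closedBall (c i) (r i)))
    (hsub : ∀ i, Metric.closedBall (c i) (r i) ⊆ Metric.closedBall y R) :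
    ∑' i, ENNReal.ofReal (r i) ^ finrank ℝ E ≤ ENNReal.ofReal R ^ finrank ℝ E := by
  borelize E
  let μ : Measure E := Measure.addHaar
  refine (ENNReal.mul_le_mul_iff_left (Metric.measure_ball_pos μ 0 one_pos).ne'
    measure_ball_lt_top.ne).1 ?_
  calc (∑' i, ENNReal.ofReal (r i) ^ finrank ℝ E) * μ (Metric.ball 0 1)
      = ∑' i, μ (Metric.closedBall (c i) (r i)) := by
        rw [← ENNReal.tsum_mul_right]
        refine tsum_congr fun i => ?_
        rw [Measure.addHaar_closedBall _ _ (hr i), ENNReal.ofReal_pow (hr i)]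
    _ = μ (⋃ i, Metric.closedBall (c i) (r i)) :=
        (measure_iUnion hdisj fun _ => Metric.isClosed_closedBall.measurableSet).symm
    _ ≤ μ (Metric.closedBall y R) := measure_mono (Set.iUnion_subset hsub)
    _ = ENNReal.ofReal R ^ finrank ℝ E * μ (Metric.ball 0 1) := by
        rw [Measure.addHaar_closedBall _ _ hR, ENNReal.ofReal_pow hR]

variable {G S : Set E}

theorem IsWhitneyNet.tsum_boundaryDist_pow_finrank_le (hS : IsWhitneyNet G S) {T : Set S}
    {y : E} {R : ℝ} (hR : 0 ≤ R) (hT : ∀ i ∈ T, dist (i : E) y + boundaryDist G i / 100 ≤ R) :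
    ∑' i : T, ENNReal.ofReal (boundaryDist G i) ^ finrank ℝ E ≤
      ENNReal.ofReal (100 * R) ^ finrank ℝ E := by
  have : Countable S := hS.countable.to_subtype
  have hpack := tsum_ofReal_radius_pow_finrank_le (y := y) (c := fun i : T => (i : E))
    (r := fun i : T => boundaryDist G i / 100)
    (fun _ => div_nonneg boundaryDist_nonneg (by norm_num)) hR
    (hS.pairwise_disjoint_closedBall.comp_of_injective Subtype.val_injective)
    fun i => Metric.closedBall_subset_closedBall' (by linarith [hT i i.2])
  calc ∑' i : T, ENNReal.ofReal (boundaryDist G i) ^ finrank ℝ E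
      = ENNReal.ofReal 100 ^ finrank ℝ E *
          ∑' i : T, ENNReal.ofReal (boundaryDist G i / 100) ^ finrank ℝ E := by
        rw [← ENNReal.tsum_mul_left]
        refine tsum_congr fun i => ?_
        rw [← mul_pow, ← ENNReal.ofReal_mul (by norm_num), mul_div_cancel₀ _ (by norm_num)]
    _ ≤ ENNReal.ofReal 100 ^ finrank ℝ E * ENNReal.ofReal R ^ finrank ℝ E := by gcongr
    _ = ENNReal.ofReal (100 * R) ^ finrank ℝ E := by
        rw [← mul_pow, ← ENNReal.ofReal_mul (by norm_num)]

variable [MeasurableSpace E] [BorelSpace E] {μ : Measure E} [μ.IsAddHaarMeasure] {s : ℝ}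

theorem ofReal_boundaryDist_rpow_mul_measure_ball_le {x : E} (hx : 0 < boundaryDist G x)
    (hs : 0 ≤ s) :
    ENNReal.ofReal (boundaryDist G x ^ (finrank ℝ E - s)) * μ (Metric.ball 0 1) ≤
      ENNReal.ofReal (2 ^ s * 100 ^ finrank ℝ E) *
        ∫⁻ y in Metric.closedBall x (boundaryDist G x / 100),
          ENNReal.ofReal ((1 / boundaryDist G y) ^ s) ∂μ := by
  set d := boundaryDist G x
  have const_le : ENNReal.ofReal ((1 / (2 * d)) ^ s) * μ (Metric.closedBall x (d / 100)) ≤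
      ∫⁻ y in Metric.closedBall x (d / 100), ENNReal.ofReal ((1 / boundaryDist G y) ^ s) ∂μ := by
    rw [← setLIntegral_const]
    refine setLIntegral_mono' Metric.isClosed_closedBall.measurableSet fun y hy => ?_
    have hyx : dist y x ≤ d / 100 := hy
    have hy0 : 0 < boundaryDist G y := by
      linarith [boundaryDist_le_add_dist G x y, dist_comm x y]
    refine ENNReal.ofReal_le_ofReal (Real.rpow_le_rpow (by positivity) ?_ hs)
    exact one_div_le_one_div_of_le hy0 (by linarith [boundaryDist_le_add_dist G y x])
  have power_eq : d ^ (finrank ℝ E - s) =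
      2 ^ s * 100 ^ finrank ℝ E * ((1 / (2 * d)) ^ s * (d / 100) ^ finrank ℝ E) := by
    rw [Real.rpow_sub hx, Real.rpow_natCast, one_div, Real.inv_rpow (by positivity),
      Real.mul_rpow two_pos.le hx.le, div_pow]
    field_simp
  calc _ = ENNReal.ofReal (2 ^ s * 100 ^ finrank ℝ E) *
        (ENNReal.ofReal ((1 / (2 * d)) ^ s) * μ (Metric.closedBall x (d / 100))) := by
        rw [power_eq, Measure.addHaar_closedBall _ _ (by positivity),
          ENNReal.ofReal_mul (p := 2 ^ s * 100 ^ finrank ℝ E) (by positivity),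
          ENNReal.ofReal_mul (p := (1 / (2 * d)) ^ s) (by positivity)]
        ring
    _ ≤ _ := by gcongr

theorem IsWhitneyNet.tsum_boundaryDist_rpow_ne_top (hS : IsWhitneyNet G S) (hG : IsOpen G)
    (hfr : (frontier G).Nonempty) (hs : 0 ≤ s)
    (hint : ∫⁻ x in G, ENNReal.ofReal ((1 / boundaryDist G x) ^ s) ∂μ ≠ ⊤) :
    ∑' i : S, ENNReal.ofReal (boundaryDist G i ^ (finrank ℝ E - s)) ≠ ⊤ := by
  have : Countable S := hS.countable.to_subtype
  have hδ (i : S) : 0 < boundaryDist G i := boundaryDist_pos hG hfr (hS.subset i.2)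
  have hsum : (∑' i : S, ENNReal.ofReal (boundaryDist G i ^ (finrank ℝ E - s))) *
      μ (Metric.ball 0 1) ≤ ENNReal.ofReal (2 ^ s * 100 ^ finrank ℝ E) *
        ∫⁻ x in G, ENNReal.ofReal ((1 / boundaryDist G x) ^ s) ∂μ := by
    rw [← ENNReal.tsum_mul_right]
    refine (ENNReal.tsum_le_tsum fun i =>
      ofReal_boundaryDist_rpow_mul_measure_ball_le (hδ i) hs).trans ?_
    rw [ENNReal.tsum_mul_left, ← lintegral_iUnion
      (fun _ => Metric.isClosed_closedBall.measurableSet) hS.pairwise_disjoint_closedBall]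
    gcongr
    exact Set.iUnion_subset fun i => (closedBall_subset_whitneyBall (by linarith [hδ i])).trans
      (whitneyBall_subset hG (hS.subset i.2))
  exact ne_of_lt (ENNReal.lt_top_of_mul_ne_top_left
    (ne_top_of_le_ne_top (ENNReal.mul_ne_top ENNReal.ofReal_ne_top hint) hsum)
    (Metric.measure_ball_pos μ 0 one_pos).ne')

end WhitneyNets

section HolderInequalities

theorem tsum_rpow_mul_rpow_one_sub_le {ι : Type*} (a b : ι → ℝ≥0∞) {θ : ℝ} (h₀ : 0 ≤ θ)
    (h₁ : θ ≤ 1) :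
    ∑' i, a i ^ θ * b i ^ (1 - θ) ≤ (∑' i, a i) ^ θ * (∑' i, b i) ^ (1 - θ) := by
  let _ : MeasurableSpace ι := ⊤
  simpa only [lintegral_count] using
    ENNReal.lintegral_mul_norm_pow_le (μ := Measure.count) (f := a) (g := b)
      measurable_from_top.aemeasurable measurable_from_top.aemeasurable h₀ (sub_nonneg.2 h₁)
      (add_sub_cancel _ _)

theorem lintegral_rpow_le_rpow_mul_measure_univ {α : Type*} [MeasurableSpace α] {ν : Measure α}
    {g : α → ℝ≥0∞} {q p : ℝ} (hg : AEMeasurable g ν) (hq : 0 < q) (hqp : q ≤ p) :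
    ∫⁻ y, g y ^ q ∂ν ≤ (∫⁻ y, g y ^ p ∂ν) ^ (q / p) * ν Set.univ ^ (1 - q / p) := by
  have hp : 0 < p := hq.trans_le hqp
  simpa only [ENNReal.one_rpow, mul_one, ← ENNReal.rpow_mul, mul_div_cancel₀ _ hp.ne',
    lintegral_const, one_mul] using
    ENNReal.lintegral_mul_norm_pow_le (f := fun y => g y ^ p) (g := fun _ => 1)
      (hg.pow_const p) aemeasurable_const (div_nonneg hq.le hp.le)
      (sub_nonneg.2 ((div_le_one hp).2 hqp)) (add_sub_cancel _ _)

theorem tsum_mul_setLIntegral_le {ι α : Type*} [Countable ι] [MeasurableSpace α] {ν : Measure α}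
    {A : Set α} {B : ι → Set α} {w : ι → ℝ≥0∞} {K : ℝ≥0∞} {g : α → ℝ≥0∞} (hA : MeasurableSet A)
    (hB : ∀ i, MeasurableSet (B i)) (hBA : ∀ i, B i ⊆ A)
    (hw : ∀ y ∈ A, ∑' i, (B i).indicator (fun _ => w i) y ≤ K)
    (hg : AEMeasurable g (ν.restrict A)) :
    ∑' i, w i * ∫⁻ y in B i, g y ∂ν ≤ K * ∫⁻ y in A, g y ∂ν := by
  have mul_setLIntegral_eq : ∀ i, w i * ∫⁻ y in B i, g y ∂ν =
      ∫⁻ y in A, (B i).indicator (fun _ => w i) y * g y ∂ν := by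
    intro i
    simp_rw [← Set.indicator_mul_left (B i) (fun _ => w i) g]
    rw [setLIntegral_indicator (hB i), Set.inter_eq_left.2 (hBA i),
      lintegral_const_mul'' _ (hg.mono_set (hBA i))]
  calc ∑' i, w i * ∫⁻ y in B i, g y ∂ν
      = ∫⁻ y in A, ∑' i, (B i).indicator (fun _ => w i) y * g y ∂ν := by
        simp_rw [mul_setLIntegral_eq]
        exact (lintegral_tsum fun i =>
          (measurable_const.indicator (hB i)).aemeasurable.mul hg).symm
    _ ≤ ∫⁻ y in A, K * g y ∂ν := by
        refine setLIntegral_mono' hA fun y hy => ?_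
        rw [ENNReal.tsum_mul_right]
        gcongr
        exact hw y hy
    _ = K * ∫⁻ y in A, g y ∂ν := lintegral_const_mul'' _ hg

theorem tsum_sigma_fin_le {ι : Type*} {M : ι → ℕ} {f : (Σ i, Fin (M i + 1)) → ℝ≥0∞} {b : ι → ℝ≥0∞}
    (h : ∀ a, f a ≤ (M a.1 + 1 : ℝ≥0∞) ^ (-1 : ℝ) * b a.1) : ∑' a, f a ≤ ∑' i, b i := by
  rw [ENNReal.tsum_sigma']
  refine ENNReal.tsum_le_tsum fun i => ?_
  have hM : (M i + 1 : ℝ≥0∞) * (M i + 1 : ℝ≥0∞) ^ (-1 : ℝ) = 1 := by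
    rw [ENNReal.rpow_neg_one]
    exact ENNReal.mul_inv_cancel (by positivity) (by finiteness)
  calc ∑' k, f ⟨i, k⟩ ≤ ∑' _ : Fin (M i + 1), (M i + 1 : ℝ≥0∞) ^ (-1 : ℝ) * b i :=
        ENNReal.tsum_le_tsum fun k => h ⟨i, k⟩
    _ = b i := by
        rw [tsum_fintype, Finset.sum_const, Finset.card_univ, Fintype.card_fin, nsmul_eq_mul,
          Nat.cast_add_one, ← mul_assoc, hM, one_mul]

end HolderInequalities

section LinkWeights

variable {E : Type*} [NormedAddCommGroup E] [NormedSpace ℝ E] {G S : Set E} {β C D : ℝ} {x₀ : E}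
  {M : S → ℕ} {z : S → ℕ → E}

/-- The weight `δ(i) ^ n * (M i + 1) ^ ρ * δ(z i k) ^ τ` of the `k`-th link of the chain of length
`M i` which starts at the point `i` of a Whitney net. -/
noncomputable def linkWeight (G : Set E) (z : S → ℕ → E) (ρ τ : ℝ) (a : Σ i : S, Fin (M i + 1)) :
    ℝ≥0∞ :=
  ENNReal.ofReal (boundaryDist G a.1) ^ finrank ℝ E * (M a.1 + 1 : ℝ≥0∞) ^ ρ *
    ENNReal.ofReal (boundaryDist G (z a.1 a.2)) ^ τ

theorem IsWhitneyChain.dist_add_boundaryDist_le {X : Type*} [PseudoMetricSpace X] {G : Set X}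
    {x x₀ : X} {M : ℕ} {z : ℕ → X} {k : ℕ} {y : X} (h : IsWhitneyChain G β C x x₀ M z)
    (hβ : β ∈ Set.Ioc 0 1) (hC : 0 < C) (hD : 1 ≤ D) (hpos : 0 < boundaryDist G (z k))
    (hle : boundaryDist G (z k) ≤ D) (hy : y ∈ whitneyBall G (z k)) :
    dist x y + boundaryDist G x / 100 ≤ 4 * (C + D) * boundaryDist G y ^ β := by
  set t := boundaryDist G (z k)
  have hyz : dist y (z k) < t / 2 := hy
  have hty : t ≤ 2 * boundaryDist G y := by
    linarith [boundaryDist_le_add_dist G (z k) y, dist_comm y (z k)]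
  have ht_rpow : t ^ β ≤ 2 * boundaryDist G y ^ β :=
    calc t ^ β ≤ (2 * boundaryDist G y) ^ β := Real.rpow_le_rpow hpos.le hty hβ.1.le
      _ = 2 ^ β * boundaryDist G y ^ β := Real.mul_rpow two_pos.le boundaryDist_nonneg
      _ ≤ 2 * boundaryDist G y ^ β := by
          gcongr
          · exact Real.rpow_nonneg boundaryDist_nonneg _
          · exact Real.rpow_le_self_of_one_le one_le_two hβ.2
  have ht_self : t ≤ D * t ^ β :=
    calc t = t ^ (1 - β) * t ^ β := by rw [← Real.rpow_add hpos, sub_add_cancel, Real.rpow_one]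
      _ ≤ D * t ^ β := by
          gcongr
          exact (Real.rpow_le_rpow hpos.le hle (sub_nonneg.2 hβ.2)).trans
            (Real.rpow_le_self_of_one_le hD (by linarith [hβ.1]))
  have hxz : dist x (z k) ≤ C * t ^ β := h.dist_source_le k
  have hδx : boundaryDist G x ≤ (C + D) * t ^ β := by
    linarith [boundaryDist_le_add_dist G x (z k)]
  have hCD : (C + D) * t ^ β ≤ (C + D) * (2 * boundaryDist G y ^ β) := by gcongr
  have hCDy : 0 ≤ (C + D) * boundaryDist G y ^ β :=
    mul_nonneg (by linarith) (Real.rpow_nonneg boundaryDist_nonneg _)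
  linarith [dist_triangle_right x y (z k)]

theorem ofReal_boundaryDist_rpow_neg_le {X : Type*} [PseudoMetricSpace X] {G : Set X} {w y : X}
    {a : ℝ} (hy : y ∈ whitneyBall G w) (ha : 0 ≤ a) :
    ENNReal.ofReal (boundaryDist G w) ^ (-a) ≤
      ENNReal.ofReal (3 / 2) ^ a * ENNReal.ofReal (boundaryDist G y) ^ (-a) := by
  have hyw : boundaryDist G y ≤ 3 / 2 * boundaryDist G w := by
    linarith [boundaryDist_le_add_dist G y w, Metric.mem_ball.1 hy]
  calc ENNReal.ofReal (boundaryDist G w) ^ (-a)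
      = ENNReal.ofReal (3 / 2) ^ a *
          (ENNReal.ofReal (3 / 2) * ENNReal.ofReal (boundaryDist G w)) ^ (-a) := by
        rw [ENNReal.mul_rpow_of_ne_top ENNReal.ofReal_ne_top ENNReal.ofReal_ne_top, ← mul_assoc,
          ← ENNReal.rpow_add _ _ (by norm_num) ENNReal.ofReal_ne_top, add_neg_cancel,
          ENNReal.rpow_zero, one_mul]
    _ ≤ ENNReal.ofReal (3 / 2) ^ a * ENNReal.ofReal (boundaryDist G y) ^ (-a) := by
        rw [← ENNReal.ofReal_mul (by norm_num)]
        simp only [ENNReal.rpow_neg]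
        gcongr

variable [FiniteDimensional ℝ E]

theorem IsWhitneyNet.tsum_indicator_linkWeight_le (hS : IsWhitneyNet G S) (hG : IsOpen G)
    (hfr : (frontier G).Nonempty) (hβ : β ∈ Set.Ioc 0 1) (hC : 0 < C) (hD : 1 ≤ D)
    (hδ : ∀ x ∈ G, boundaryDist G x ≤ D) (hz : ∀ i : S, IsWhitneyChain G β C i x₀ (M i) (z i))
    {y : E} (hy : y ∈ G) :
    ∑' a : Σ i : S, Fin (M i + 1), (whitneyBall G (z a.1 a.2)).indicator
        (fun _ => linkWeight G z (-1) (-(β * finrank ℝ E)) a) y ≤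
      ENNReal.ofReal (3 / 2) ^ (β * finrank ℝ E) *
        ENNReal.ofReal (100 * (4 * (C + D))) ^ finrank ℝ E := by
  set n := finrank ℝ E
  set A := ENNReal.ofReal (3 / 2) ^ (β * n) * ENNReal.ofReal (boundaryDist G y) ^ (-(β * n)) with hA
  let T : Set S := {i | ∃ k, y ∈ whitneyBall G (z i k)}
  have hy₀ : 0 < boundaryDist G y := boundaryDist_pos hG hfr hy
  have hT : ∀ i ∈ T, dist (i : E) y + boundaryDist G i / 100 ≤
      4 * (C + D) * boundaryDist G y ^ β := by
    rintro i ⟨k, hyk⟩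
    exact (hz i).dist_add_boundaryDist_le hβ hC hD (boundaryDist_pos hG hfr ((hz i).mem k))
      (hδ _ ((hz i).mem k)) hyk
  have hyβ : ENNReal.ofReal (boundaryDist G y) ^ (-(β * n)) *
      ENNReal.ofReal (boundaryDist G y ^ β) ^ n = 1 := by
    rw [← ENNReal.ofReal_rpow_of_pos hy₀, ← ENNReal.rpow_natCast, ← ENNReal.rpow_mul,
      ← ENNReal.rpow_add _ _ (by simpa using hy₀) ENNReal.ofReal_ne_top, neg_add_cancel,
      ENNReal.rpow_zero]
  calc ∑' a : Σ i : S, Fin (M i + 1), (whitneyBall G (z a.1 a.2)).indicator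
        (fun _ => linkWeight G z (-1) (-(β * n)) a) y
      ≤ ∑' i : S, T.indicator (fun i => A * ENNReal.ofReal (boundaryDist G i) ^ n) i := by
        refine tsum_sigma_fin_le fun ⟨i, k⟩ => ?_
        by_cases hyk : y ∈ whitneyBall G (z i k)
        · rw [Set.indicator_of_mem hyk, Set.indicator_of_mem (show i ∈ T from ⟨k, hyk⟩)]
          calc linkWeight G z (-1) (-(β * n)) ⟨i, k⟩
              ≤ ENNReal.ofReal (boundaryDist G i) ^ n * (M i + 1 : ℝ≥0∞) ^ (-1 : ℝ) * A :=
                mul_le_mul_right (ofReal_boundaryDist_rpow_neg_le hyk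
                  (mul_nonneg hβ.1.le n.cast_nonneg)) _
            _ = _ := by ring
        · rw [Set.indicator_of_notMem hyk]
          exact zero_le
    _ = A * ∑' i : T, ENNReal.ofReal (boundaryDist G i) ^ n := by
        rw [← tsum_subtype T, ENNReal.tsum_mul_left]
    _ ≤ A * ENNReal.ofReal (100 * (4 * (C + D) * boundaryDist G y ^ β)) ^ n := by
        gcongr
        exact hS.tsum_boundaryDist_pow_finrank_le
          (mul_nonneg (by linarith) (Real.rpow_nonneg boundaryDist_nonneg _)) hT
    _ = _ := by
        rw [← mul_assoc 100, ENNReal.ofReal_mul (by linarith), mul_pow, hA, mul_mul_mul_comm, hyβ,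
          mul_one]

end LinkWeights

section GrowthExponents

theorem exists_le_mul_rpow_neg_of_le_mul_log {A B D ε : ℝ} (hA : 0 ≤ A) (hD : 0 ≤ D) (hε : 0 < ε) :
    ∃ K, 0 ≤ K ∧ ∀ t N : ℝ, 0 < t → t ≤ D → N ≤ A * Real.log (1 / t) + B → N ≤ K * t ^ (-ε) := by
  refine ⟨A / ε + |B| * D ^ ε, by positivity, fun t N ht htD hN => ?_⟩
  have hlog : Real.log (1 / t) ≤ t ^ (-ε) / ε := by
    rw [Real.rpow_neg ht.le, ← Real.inv_rpow ht.le, ← one_div]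
    exact Real.log_le_rpow_div (by positivity) hε
  have hDt : 1 ≤ D ^ ε * t ^ (-ε) := by
    rw [Real.rpow_neg ht.le, ← div_eq_mul_inv, one_le_div (by positivity)]
    exact Real.rpow_le_rpow ht.le htD hε.le
  calc N ≤ A * Real.log (1 / t) + B := hN
    _ ≤ A * (t ^ (-ε) / ε) + |B| * (D ^ ε * t ^ (-ε)) := by
        gcongr
        exact (le_abs_self B).trans (le_mul_of_one_le_right (abs_nonneg B) hDt)
    _ = _ := by ring

theorem rpow_le_mul_rpow_div_of_rpow_le {t d C D β e e' : ℝ} (ht : 0 < t) (hd : 0 < d) (hdD : d ≤ D)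
    (hC : 0 < C) (hee : e' ≤ e) (he' : e' ≤ 0) (htd : t ^ (1 / β) ≤ C * d) :
    d ^ e ≤ D ^ (e - e') * C ^ (-e') * t ^ (e' / β) := by
  have hd_ge : t ^ (1 / β) / C ≤ d := (div_le_iff₀' hC).2 htd
  calc d ^ e = d ^ (e - e') * d ^ e' := by rw [← Real.rpow_add hd, sub_add_cancel]
    _ ≤ D ^ (e - e') * (t ^ (1 / β) / C) ^ e' := by
        gcongr ?_ * ?_
        · exact Real.rpow_nonneg (hd.le.trans hdD) _
        · exact Real.rpow_le_rpow hd.le hdD (sub_nonneg.2 hee)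
        · exact Real.rpow_le_rpow_of_nonpos (by positivity) hd_ge he'
    _ = _ := by
        rw [Real.div_rpow (by positivity) hC.le, ← Real.rpow_mul ht.le, one_div_mul_eq_div,
          Real.rpow_neg hC.le]
        ring

theorem exists_rpow_mul_rpow_le {A B C D β ν e τ : ℝ} (hA : 0 ≤ A) (hC : 0 < C) (hD : 0 ≤ D)
    (hβ : 0 < β) (hν : 0 < ν) (hτ : 0 < τ) (he : 0 < e + β * τ) :
    ∃ s K : ℝ, 0 < s ∧ s < τ ∧ ∀ t d N : ℝ, 0 < t → t ≤ D → 0 < d → d ≤ D → 0 ≤ N →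
      t ^ (1 / β) ≤ C * d → N ≤ A * Real.log (1 / t) + B → N ^ ν * d ^ e ≤ K * t ^ (-s) := by
  obtain ⟨e', hee, he', hβe⟩ : ∃ e' ≤ e, e' < 0 ∧ -e' / β < τ := by
    refine ⟨min e (-(β * τ) / 2), min_le_left _ _, (min_le_right _ _).trans_lt ?_, ?_⟩
    · linarith [mul_pos hβ hτ]
    · rw [div_lt_iff₀ hβ, neg_lt, lt_min_iff]
      constructor <;> linarith [mul_pos hβ hτ]
  obtain ⟨s, hs, hsτ⟩ := exists_between hβe
  have hη : 0 < s + e' / β := by rw [neg_div] at hs; linarith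
  obtain ⟨K, hK, hlog⟩ :=
    exists_le_mul_rpow_neg_of_le_mul_log (B := B) hA hD (div_pos hη hν)
  refine ⟨s, K ^ ν * (D ^ (e - e') * C ^ (-e')), (div_pos (neg_pos.2 he') hβ).trans hs, hsτ,
    fun t d N ht htD hd hdD hN htd hNt => ?_⟩
  calc N ^ ν * d ^ e
      ≤ (K * t ^ (-((s + e' / β) / ν))) ^ ν * (D ^ (e - e') * C ^ (-e') * t ^ (e' / β)) := by
        gcongr
        · exact hlog t N ht htD hNt
        · exact rpow_le_mul_rpow_div_of_rpow_le ht hd hdD hC hee he'.le htd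
    _ = K ^ ν * (D ^ (e - e') * C ^ (-e')) * (t ^ (-(s + e' / β)) * t ^ (e' / β)) := by
        rw [Real.mul_rpow hK (by positivity), ← Real.rpow_mul ht.le, ← neg_div,
          div_mul_cancel₀ _ hν.ne']
        ring
    _ = _ := by rw [← Real.rpow_add ht, neg_add, neg_add_cancel_right]

end GrowthExponents

section ChainSums

variable {E F : Type*} [NormedAddCommGroup E] [NormedSpace ℝ E] [FiniteDimensional ℝ E]
  [MeasurableSpace E] [BorelSpace E] {μ : Measure E}
  [NormedAddCommGroup F] [NormedSpace ℝ F] {G S : Set E} {β C D q p : ℝ} {x₀ : E} {M : S → ℕ}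
  {z : S → ℕ → E} {u m : E → F}

theorem IsWhitneyNet.exists_tsum_linkWeight_mul_setLIntegral_le (hS : IsWhitneyNet G S)
    (hG : IsOpen G) (hfr : (frontier G).Nonempty) (hβ : β ∈ Set.Ioc 0 1) (hC : 0 < C) (hD : 1 ≤ D)
    (hδ : ∀ x ∈ G, boundaryDist G x ≤ D) (hz : ∀ i : S, IsWhitneyChain G β C i x₀ (M i) (z i)) :
    ∃ A : ℝ≥0∞, A ≠ ⊤ ∧ ∀ g : E → ℝ≥0∞, AEMeasurable g (μ.restrict G) →
      ∑' a : Σ i : S, Fin (M i + 1), linkWeight G z (-1) (-(β * finrank ℝ E)) a *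
          ∫⁻ y in whitneyBall G (z a.1 a.2), g y ∂μ ≤
        A * ∫⁻ y in G, g y ∂μ := by
  have : Countable S := hS.countable.to_subtype
  refine ⟨_, ENNReal.mul_ne_top (ENNReal.rpow_ne_top_of_nonneg (mul_nonneg hβ.1.le
    (Nat.cast_nonneg _)) ENNReal.ofReal_ne_top) (ENNReal.pow_ne_top ENNReal.ofReal_ne_top),
    fun g hg => tsum_mul_setLIntegral_le hG.measurableSet
      (fun _ => isOpen_whitneyBall.measurableSet)
      (fun a => whitneyBall_subset hG ((hz a.1).mem a.2))
      (fun y hy => hS.tsum_indicator_linkWeight_le hG hfr hβ hC hD hδ hz hy) hg⟩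

variable [μ.IsAddHaarMeasure]

theorem IsWhitneyNet.tsum_linkWeight_ne_top (hS : IsWhitneyNet G S) (hG : IsOpen G)
    (hfr : (frontier G).Nonempty) (hβ : 0 < β) (hC : 0 < C) (hD : 0 ≤ D)
    (hδ : ∀ x ∈ G, boundaryDist G x ≤ D) (hz : ∀ i : S, IsWhitneyChain G β C i x₀ (M i) (z i))
    {τ κ e : ℝ} (hκ : -1 < κ) (hτ : 0 < τ) (he : 0 < e + β * τ)
    (hint : ∀ s, 0 < s → s < τ → ∫⁻ x in G, ENNReal.ofReal ((1 / boundaryDist G x) ^ s) ∂μ ≠ ⊤) :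
    ∑' a, linkWeight (M := M) G z κ e a ≠ ⊤ := by
  obtain ⟨s, K, hs, hsτ, hK⟩ := exists_rpow_mul_rpow_le (A := 16 / β) (B := C) (by positivity)
    hC hD hβ (neg_lt_iff_pos_add.1 hκ) hτ he
  refine ne_top_of_le_ne_top (ENNReal.mul_ne_top (ENNReal.ofReal_ne_top (r := K))
    (hS.tsum_boundaryDist_rpow_ne_top hG hfr hs.le (hint s hs hsτ))) ?_
  rw [← ENNReal.tsum_mul_left]
  refine tsum_sigma_fin_le fun ⟨i, k⟩ => ?_
  have ht := boundaryDist_pos hG hfr (hS.subset i.2)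
  have hd := boundaryDist_pos hG hfr ((hz i).mem k)
  set t := boundaryDist G i
  set d := boundaryDist G (z i k)
  set n := finrank ℝ E
  have hN : (M i + 1 : ℝ≥0∞) ^ κ = (M i + 1 : ℝ≥0∞) ^ (-1 : ℝ) * (M i + 1 : ℝ≥0∞) ^ (κ + 1) := by
    rw [← ENNReal.rpow_add _ _ (by positivity) (by finiteness), neg_add_cancel_comm_assoc]
  have growth : (M i + 1 : ℝ≥0∞) ^ (κ + 1) * ENNReal.ofReal d ^ e ≤
      ENNReal.ofReal K * ENNReal.ofReal t ^ (-s) := by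
    have hreal := hK t d (M i + 1) ht (hδ _ (hS.subset i.2)) hd (hδ _ ((hz i).mem k))
      (by positivity) ((hz i).rpow_le k) (hz i).length_le
    have hM : (M i + 1 : ℝ≥0∞) = ENNReal.ofReal (M i + 1) := by
      rw [← Nat.cast_add_one, ← Nat.cast_add_one, ENNReal.ofReal_natCast]
    rw [hM, ENNReal.ofReal_rpow_of_pos (by positivity), ENNReal.ofReal_rpow_of_pos hd,
      ENNReal.ofReal_rpow_of_pos ht, ← ENNReal.ofReal_mul (by positivity),
      ← ENNReal.ofReal_mul' (by positivity)]
    exact ENNReal.ofReal_le_ofReal hreal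
  calc linkWeight G z κ e ⟨i, k⟩
      = (M i + 1 : ℝ≥0∞) ^ (-1 : ℝ) * (ENNReal.ofReal t ^ n *
          ((M i + 1 : ℝ≥0∞) ^ (κ + 1) * ENNReal.ofReal d ^ e)) := by
        rw [linkWeight, hN]
        ring
    _ ≤ (M i + 1 : ℝ≥0∞) ^ (-1 : ℝ) * (ENNReal.ofReal t ^ n *
          (ENNReal.ofReal K * ENNReal.ofReal t ^ (-s))) := by gcongr
    _ = _ := by
        rw [← ENNReal.ofReal_rpow_of_pos ht, sub_eq_add_neg,
          ENNReal.rpow_add _ _ (by simpa using ht) ENNReal.ofReal_ne_top, ENNReal.rpow_natCast]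
        ring

theorem IsLocalApprox.setLIntegral_enorm_sub_rpow_le (hm : IsLocalApprox μ G q u m) (hG : IsOpen G)
    (hfr : (frontier G).Nonempty) (hq : 1 ≤ q) (hu : DifferentiableOn ℝ u G)
    (hS : IsWhitneyNet G S) (hz : ∀ i : S, IsWhitneyChain G β C i x₀ (M i) (z i)) :
    ∫⁻ y in G, ‖u y - m x₀‖ₑ ^ q ∂μ ≤
      2 ^ (q - 1) * (2 ^ finrank ℝ E + 2 * neighbourConst μ q * μ (Metric.ball 0 1)) *
        ∑' a : Σ i : S, Fin (M i + 1), ENNReal.ofReal (boundaryDist G a.1) ^ finrank ℝ E *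
          (M a.1 + 1 : ℝ≥0∞) ^ (q - 1) * scaledEnergy μ G q u (z a.1 a.2) := by
  have : Countable S := hS.countable.to_subtype
  set K := 2 ^ (q - 1) * (2 ^ finrank ℝ E + 2 * neighbourConst μ q * μ (Metric.ball 0 1))
  have cell_le : ∀ i : S,
      ∫⁻ y in Metric.closedBall (i : E) (boundaryDist G i / 25), ‖u y - m x₀‖ₑ ^ q ∂μ ≤
        K * ∑' k : Fin (M i + 1), ENNReal.ofReal (boundaryDist G i) ^ finrank ℝ E *
          (M i + 1 : ℝ≥0∞) ^ (q - 1) * scaledEnergy μ G q u (z i k) := by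
    intro i
    have h := hm.lintegral_closedBall_le hG hfr hq hu (fun k _ => (hz i).mem k) (hz i).dist_succ_le
    rwa [(hz i).source, (hz i).target, Finset.sum_range, ← tsum_fintype (L := .unconditional _),
      ← ENNReal.tsum_mul_left] at h
  calc ∫⁻ y in G, ‖u y - m x₀‖ₑ ^ q ∂μ
      ≤ ∫⁻ y in ⋃ i : S, Metric.closedBall (i : E) (boundaryDist G i / 25),
          ‖u y - m x₀‖ₑ ^ q ∂μ := lintegral_mono_set hS.subset_iUnion
    _ ≤ ∑' i : S, ∫⁻ y in Metric.closedBall (i : E) (boundaryDist G i / 25),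
          ‖u y - m x₀‖ₑ ^ q ∂μ := lintegral_iUnion_le _ _
    _ ≤ ∑' i : S, K * ∑' k : Fin (M i + 1), ENNReal.ofReal (boundaryDist G i) ^ finrank ℝ E *
          (M i + 1 : ℝ≥0∞) ^ (q - 1) * scaledEnergy μ G q u (z i k) := ENNReal.tsum_le_tsum cell_le
    _ = _ := by rw [ENNReal.tsum_mul_left, ENNReal.tsum_sigma']

variable [CompleteSpace F]

theorem scaledEnergy_le_rpow_mul (hq : 0 < q) (hqp : q ≤ p) {w : E}
    (hw : 0 < boundaryDist G w) :
    scaledEnergy μ G q u w ≤ ENNReal.ofReal (boundaryDist G w) ^ (q - finrank ℝ E) *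
      ((∫⁻ y in whitneyBall G w, ‖fderiv ℝ u y‖ₑ ^ p ∂μ) ^ (q / p) *
        (ENNReal.ofReal (boundaryDist G w) ^ (finrank ℝ E : ℝ) *
          μ (Metric.ball 0 1)) ^ (1 - q / p)) := by
  refine mul_le_mul_right ?_ _
  refine (lintegral_rpow_le_rpow_mul_measure_univ
    (measurable_fderiv ℝ u).enorm.aemeasurable hq hqp).trans ?_
  rw [Measure.restrict_apply_univ]
  gcongr
  · exact sub_nonneg.2 ((div_le_one (hq.trans_le hqp)).2 hqp)
  · rw [whitneyBall, Measure.addHaar_ball_of_pos _ _ (half_pos hw),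
      ENNReal.rpow_natCast, ← ENNReal.ofReal_pow hw.le]
    gcongr
    exact half_le_self hw.le

theorem holder_weights_eq {Δ N d v H : ℝ≥0∞} (hΔ : Δ ≠ 0) (hΔ' : Δ ≠ ⊤) (hN : N ≠ 0)
    (hN' : N ≠ ⊤) (hd : d ≠ 0) (hd' : d ≠ ⊤) {n θ κ e b : ℝ} (hθ : 0 ≤ θ) (hθ' : θ ≤ 1)
    (hκ : κ * (1 - θ) = q - 1 + θ) (he : e * (1 - θ) = q - n * θ + b * θ) :
    Δ ^ n * N ^ (q - 1) * (d ^ (q - n) * (H ^ θ * (d ^ n * v) ^ (1 - θ))) =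
      v ^ (1 - θ) * ((Δ ^ n * N ^ (-1 : ℝ) * d ^ (-b) * H) ^ θ *
        (Δ ^ n * N ^ κ * d ^ e) ^ (1 - θ)) := by
  have hΔ_split : Δ ^ n = Δ ^ (n * θ) * Δ ^ (n * (1 - θ)) := by
    rw [← ENNReal.rpow_add _ _ hΔ hΔ', ← mul_add, add_sub_cancel, mul_one]
  have hN_split : N ^ (q - 1) = N ^ (-1 * θ) * N ^ (q - 1 + θ) := by
    rw [← ENNReal.rpow_add _ _ hN hN']
    ring_nf
  have hd_split : d ^ (q - n) * d ^ (n * (1 - θ)) = d ^ (-b * θ) * d ^ (q - n * θ + b * θ) := by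
    rw [← ENNReal.rpow_add _ _ hd hd', ← ENNReal.rpow_add _ _ hd hd']
    ring_nf
  simp only [ENNReal.mul_rpow_of_nonneg _ _ hθ, ENNReal.mul_rpow_of_nonneg _ _ (sub_nonneg.2 hθ'),
    ← ENNReal.rpow_mul, hκ, he]
  calc _ = Δ ^ n * N ^ (q - 1) * H ^ θ * v ^ (1 - θ) * (d ^ (q - n) * d ^ (n * (1 - θ))) := by ring
    _ = _ := by
        rw [hΔ_split, hN_split, hd_split]
        ring

theorem boundaryDist_pow_mul_scaledEnergy_le {κ e : ℝ} (hq : 0 < q) (hqp : q ≤ p)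
    (hκ : κ * (1 - q / p) = q - 1 + q / p)
    (he : e * (1 - q / p) = q - finrank ℝ E * (q / p) + β * finrank ℝ E * (q / p))
    {a : Σ i : S, Fin (M i + 1)} (ha : 0 < boundaryDist G a.1)
    (hza : 0 < boundaryDist G (z a.1 a.2)) :
    ENNReal.ofReal (boundaryDist G a.1) ^ finrank ℝ E * (M a.1 + 1 : ℝ≥0∞) ^ (q - 1) *
        scaledEnergy μ G q u (z a.1 a.2) ≤
      μ (Metric.ball 0 1) ^ (1 - q / p) *
        ((linkWeight G z (-1) (-(β * finrank ℝ E)) a *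
            ∫⁻ y in whitneyBall G (z a.1 a.2), ‖fderiv ℝ u y‖ₑ ^ p ∂μ) ^ (q / p) *
          linkWeight G z κ e a ^ (1 - q / p)) := by
  have hp : 0 < p := hq.trans_le hqp
  refine (mul_le_mul_right (scaledEnergy_le_rpow_mul hq hqp hza) _).trans_eq ?_
  simp only [linkWeight, ← ENNReal.rpow_natCast _ (finrank ℝ E)]
  exact holder_weights_eq (by simpa using ha) ENNReal.ofReal_ne_top (by positivity) (by finiteness)
    (by simpa using hza) ENNReal.ofReal_ne_top (div_nonneg hq.le hp.le) ((div_le_one hp).2 hqp)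
    hκ he

theorem exists_linkWeight_exponents {n l : ℝ} (hq : 0 < q) (hqp : q < p)
    (hl : 0 < q + β * (n - l)) (hp : q * (n - l * β) / (q + β * (n - l)) < p) :
    ∃ κ e : ℝ, -1 < κ ∧ 0 < e + β * (n - l) ∧ κ * (1 - q / p) = q - 1 + q / p ∧
      e * (1 - q / p) = q - n * (q / p) + β * n * (q / p) := by
  have hp₀ : 0 < p := hq.trans hqp
  have hθ : 0 < 1 - q / p := sub_pos.2 ((div_lt_one hp₀).2 hqp)
  refine ⟨(q - 1 + q / p) / (1 - q / p), (q - n * (q / p) + β * n * (q / p)) / (1 - q / p), ?_, ?_,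
    div_mul_cancel₀ _ hθ.ne', div_mul_cancel₀ _ hθ.ne'⟩
  · rw [lt_div_iff₀ hθ]
    linarith
  · have hpq : p - q ≠ 0 := (sub_pos.2 hqp).ne'
    have codim_eq : (q - n * (q / p) + β * n * (q / p)) / (1 - q / p) + β * (n - l) =
        (p * (q + β * (n - l)) - q * (n - l * β)) / p / (1 - q / p) := by
      field_simp
      ring
    rw [codim_eq]
    exact div_pos (div_pos (sub_pos.2 ((div_lt_iff₀ hl).1 hp)) hp₀) hθ

theorem IsWhitneyNet.exists_tsum_scaledEnergy_le (hS : IsWhitneyNet G S) (hG : IsOpen G)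
    (hfr : (frontier G).Nonempty) (hβ : β ∈ Set.Ioc 0 1) (hC : 0 < C) (hD : 1 ≤ D)
    (hδ : ∀ x ∈ G, boundaryDist G x ≤ D) (hz : ∀ i : S, IsWhitneyChain G β C i x₀ (M i) (z i))
    {l : ℝ} (hl : l < finrank ℝ E) (hint : ∀ s, 0 < s → s < finrank ℝ E - l →
      ∫⁻ x in G, ENNReal.ofReal ((1 / boundaryDist G x) ^ s) ∂μ ≠ ⊤)
    (hq : 0 < q) (hqp : q < p)
    (hp : q * (finrank ℝ E - l * β) / (q + β * (finrank ℝ E - l)) < p) :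
    ∃ K : ℝ≥0∞, K ≠ ⊤ ∧ ∀ u : E → F,
      ∑' a : Σ i : S, Fin (M i + 1), ENNReal.ofReal (boundaryDist G a.1) ^ finrank ℝ E *
          (M a.1 + 1 : ℝ≥0∞) ^ (q - 1) * scaledEnergy μ G q u (z a.1 a.2) ≤
        K * (∫⁻ y in G, ‖fderiv ℝ u y‖ₑ ^ p ∂μ) ^ (q / p) := by
  have hp₀ : 0 < p := hq.trans hqp
  have hl' : 0 < finrank ℝ E - l := sub_pos.2 hl
  have hθ : 0 ≤ q / p := by positivity
  have hθ' : 0 ≤ 1 - q / p := sub_nonneg.2 ((div_le_one hp₀).2 hqp.le)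
  obtain ⟨κ, e, hκ, he, hκ_eq, he_eq⟩ :=
    exists_linkWeight_exponents hq hqp (add_pos hq (mul_pos hβ.1 hl')) hp
  set w := linkWeight (M := M) G z (-1) (-(β * finrank ℝ E))
  set Y := linkWeight (M := M) G z κ e
  set v := μ (Metric.ball 0 1)
  obtain ⟨A, hA, overlap⟩ :=
    hS.exists_tsum_linkWeight_mul_setLIntegral_le (μ := μ) hG hfr hβ hC hD hδ hz
  have hY : ∑' a, Y a ≠ ⊤ :=
    hS.tsum_linkWeight_ne_top hG hfr hβ.1 hC (by linarith) hδ hz hκ hl' he hint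
  refine ⟨v ^ (1 - q / p) * (A ^ (q / p) * (∑' a, Y a) ^ (1 - q / p)), by finiteness,
    fun u => ?_⟩
  set H : (Σ i : S, Fin (M i + 1)) → ℝ≥0∞ := fun a =>
    ∫⁻ y in whitneyBall G (z a.1 a.2), ‖fderiv ℝ u y‖ₑ ^ p ∂μ
  calc _ ≤ ∑' a, v ^ (1 - q / p) * ((w a * H a) ^ (q / p) * Y a ^ (1 - q / p)) :=
        ENNReal.tsum_le_tsum fun a => boundaryDist_pow_mul_scaledEnergy_le hq hqp.le hκ_eq he_eq
          (boundaryDist_pos hG hfr (hS.subset a.1.2)) (boundaryDist_pos hG hfr ((hz a.1).mem a.2))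
    _ ≤ v ^ (1 - q / p) * ((∑' a, w a * H a) ^ (q / p) * (∑' a, Y a) ^ (1 - q / p)) := by
        rw [ENNReal.tsum_mul_left]
        gcongr
        exact tsum_rpow_mul_rpow_one_sub_le _ _ hθ (sub_nonneg.1 hθ')
    _ ≤ v ^ (1 - q / p) * ((A * ∫⁻ y in G, ‖fderiv ℝ u y‖ₑ ^ p ∂μ) ^ (q / p) *
          (∑' a, Y a) ^ (1 - q / p)) := by
        gcongr
        exact overlap _ ((measurable_fderiv ℝ u).enorm.pow_const p).aemeasurable
    _ = _ := by
        rw [ENNReal.mul_rpow_of_nonneg _ _ hθ]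
        ring

theorem exists_lintegral_enorm_sub_rpow_le_of_isWhitneyChain (hG : IsOpen G)
    (hGb : Bornology.IsBounded G) (hfr : (frontier G).Nonempty) (hβ : β ∈ Set.Ioc 0 1) (hC : 0 < C)
    (hchain : ∀ x ∈ G, ∃ M z, IsWhitneyChain G β C x x₀ M z) {l : ℝ} (hl : l < finrank ℝ E)
    (hint : ∀ s, 0 < s → s < finrank ℝ E - l →
      ∫⁻ x in G, ENNReal.ofReal ((1 / boundaryDist G x) ^ s) ∂μ ≠ ⊤)
    (hq : 1 ≤ q) (hqp : q < p)
    (hp : q * (finrank ℝ E - l * β) / (q + β * (finrank ℝ E - l)) < p) :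
    ∃ K : ℝ≥0∞, K ≠ ⊤ ∧ ∀ u : E → F, DifferentiableOn ℝ u G → ∃ m₀ : F,
      ∫⁻ y in G, ‖u y - m₀‖ₑ ^ q ∂μ ≤ K * (∫⁻ y in G, ‖fderiv ℝ u y‖ₑ ^ p ∂μ) ^ (q / p) := by
  obtain ⟨D, hD, hδ⟩ := exists_boundaryDist_le hGb hfr
  obtain ⟨S, hS⟩ := exists_isWhitneyNet hG hGb hfr
  choose M z hz using fun i : S => hchain i (hS.subset i.2)
  obtain ⟨K, hK, hsum⟩ := hS.exists_tsum_scaledEnergy_le (F := F) hG hfr hβ hC hD hδ hz hl hint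
    (one_pos.trans_le hq) hqp hp
  have hv := (measure_ball_lt_top (μ := μ) (x := (0 : E)) (r := 1)).ne
  have hN := neighbourConst_ne_top (μ := μ) hq
  have h₂ := two_rpow_sub_one_ne_top hq
  refine ⟨2 ^ (q - 1) * (2 ^ finrank ℝ E + 2 * neighbourConst μ q * μ (Metric.ball 0 1)) * K,
    by finiteness, fun u hu => ?_⟩
  obtain ⟨m, hm⟩ := exists_isLocalApprox (μ := μ) hG hfr hq hu
  refine ⟨m x₀, (hm.setLIntegral_enorm_sub_rpow_le hG hfr hq hu hS hz).trans ?_⟩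
  rw [mul_assoc _ K]
  gcongr
  exact hsum u

end ChainSums

section MeanValue

variable {α F : Type*} [MeasurableSpace α] {μ : Measure α} [IsFiniteMeasure μ]
  [NormedAddCommGroup F] [NormedSpace ℝ F] [CompleteSpace F] {q : ℝ} {u : α → F}

theorem enorm_sub_average_rpow_mul_measure_univ_le (hq : 1 ≤ q) (hu : Integrable u μ) (m₀ : F) :
    ‖m₀ - ⨍ x, u x ∂μ‖ₑ ^ q * μ Set.univ ≤ ∫⁻ y, ‖u y - m₀‖ₑ ^ q ∂μ := by
  rcases eq_zero_or_neZero μ with rfl | hμ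
  · simp
  let ν := (μ Set.univ)⁻¹ • μ
  have : IsProbabilityMeasure ν := isProbabilityMeasureSMul
  have hu' : Integrable u ν := hu.smul_measure (ENNReal.inv_ne_top.2 (NeZero.ne _))
  have average_sub : ⨍ x, u x ∂μ - m₀ = ∫ x, (u x - m₀) ∂ν := by
    rw [integral_sub hu' (integrable_const _), integral_const, probReal_univ, one_smul]
    rfl
  have jensen : ‖m₀ - ⨍ x, u x ∂μ‖ₑ ^ q ≤ (μ Set.univ)⁻¹ * ∫⁻ y, ‖u y - m₀‖ₑ ^ q ∂μ :=
    calc ‖m₀ - ⨍ x, u x ∂μ‖ₑ ^ q = ‖∫ x, (u x - m₀) ∂ν‖ₑ ^ q := by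
          rw [enorm_sub_rev, average_sub]
      _ ≤ (∫⁻ x, ‖u x - m₀‖ₑ ∂ν) ^ q := by
          gcongr
          exact enorm_integral_le_lintegral_enorm _
      _ ≤ ∫⁻ x, ‖u x - m₀‖ₑ ^ q ∂ν :=
          rpow_lintegral_le_lintegral_rpow ν hq
            (hu'.aestronglyMeasurable.sub aestronglyMeasurable_const).enorm
      _ = _ := lintegral_smul_measure _ _
  calc _ ≤ (μ Set.univ)⁻¹ * (∫⁻ y, ‖u y - m₀‖ₑ ^ q ∂μ) * μ Set.univ := by gcongr
    _ = _ := by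
        rw [mul_right_comm, ENNReal.inv_mul_cancel (NeZero.ne _) (measure_ne_top _ _), one_mul]

theorem lintegral_enorm_sub_average_rpow_le (hq : 1 ≤ q) (hu : Integrable u μ) (m₀ : F) :
    ∫⁻ y, ‖u y - ⨍ x, u x ∂μ‖ₑ ^ q ∂μ ≤ 2 ^ q * ∫⁻ y, ‖u y - m₀‖ₑ ^ q ∂μ :=
  calc ∫⁻ y, ‖u y - ⨍ x, u x ∂μ‖ₑ ^ q ∂μ
      ≤ 2 ^ (q - 1) * (∫⁻ y, ‖u y - m₀‖ₑ ^ q ∂μ + ‖m₀ - ⨍ x, u x ∂μ‖ₑ ^ q * μ Set.univ) :=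
        lintegral_enorm_sub_rpow_le_add hq hu.aestronglyMeasurable _ _
    _ ≤ 2 ^ (q - 1) * (∫⁻ y, ‖u y - m₀‖ₑ ^ q ∂μ + ∫⁻ y, ‖u y - m₀‖ₑ ^ q ∂μ) := by
        gcongr
        exact enorm_sub_average_rpow_mul_measure_univ_le hq hu m₀
    _ = 2 ^ (q - 1) * 2 ^ (1 : ℝ) * ∫⁻ y, ‖u y - m₀‖ₑ ^ q ∂μ := by
        rw [ENNReal.rpow_one]
        ring
    _ = _ := by rw [← ENNReal.rpow_add _ _ two_ne_zero (by finiteness), sub_add_cancel]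

end MeanValue

section RealPoincareInequality

variable {α F : Type*} [MeasurableSpace α] {μ : Measure α} [NormedAddCommGroup F] {f : α → F}
  {p : ℝ}

theorem lintegral_enorm_rpow_eq_ofReal_integral (hp : 0 ≤ p)
    (hf : Integrable (fun x => ‖f x‖ ^ p) μ) :
    ∫⁻ x, ‖f x‖ₑ ^ p ∂μ = ENNReal.ofReal (∫ x, ‖f x‖ ^ p ∂μ) := by
  rw [ofReal_integral_eq_lintegral_ofReal hf (Filter.Eventually.of_forall fun x => by positivity)]
  refine lintegral_congr fun x => ?_
  rw [← ENNReal.ofReal_rpow_of_nonneg (norm_nonneg _) hp, ofReal_norm]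

theorem integral_norm_rpow_eq_toReal_lintegral (hp : 0 ≤ p) (hf : AEStronglyMeasurable f μ) :
    ∫ x, ‖f x‖ ^ p ∂μ = (∫⁻ x, ‖f x‖ₑ ^ p ∂μ).toReal := by
  rw [integral_eq_lintegral_of_nonneg_ae (Filter.Eventually.of_forall fun x => by positivity)
    (hf.norm.aemeasurable.pow_const p).aestronglyMeasurable]
  congr 1
  refine lintegral_congr fun x => ?_
  rw [← ENNReal.ofReal_rpow_of_nonneg (norm_nonneg _) hp, ofReal_norm]

theorem supportsPoincare_of_lintegral_le {n : ℕ} {G : Set (EuclideanSpace ℝ (Fin n))} {q : ℝ}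
    {K : ℝ≥0∞} (hG : IsOpen G) (hq : 0 < q) (hp : 0 < p) (hK : K ≠ ⊤)
    (h : ∀ u : EuclideanSpace ℝ (Fin n) → ℝ, DifferentiableOn ℝ u G → IntegrableOn u G →
      ∫⁻ y in G, ‖u y - ⨍ x in G, u x‖ₑ ^ q ≤ K * (∫⁻ y in G, ‖fderiv ℝ u y‖ₑ ^ p) ^ (q / p)) :
    SupportsPoincare G q p := by
  refine ⟨K.toReal ^ (1 / q), fun u hu hui hdi => ?_⟩
  have average_eq : (∫ y in G, u y) / (volume G).toReal = ⨍ x in G, u x := by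
    rw [setAverage_eq, smul_eq_mul, div_eq_inv_mul, Measure.real]
  set I := ∫ x in G, ‖fderivWithin ℝ u G x‖ ^ p
  have hI : 0 ≤ I := integral_nonneg fun x => by positivity
  have gradient_eq : ∫⁻ y in G, ‖fderiv ℝ u y‖ₑ ^ p = ENNReal.ofReal I := by
    rw [← lintegral_enorm_rpow_eq_ofReal_integral hp.le hdi]
    exact setLIntegral_congr_fun hG.measurableSet fun x hx => by rw [fderivWithin_of_isOpen hG hx]
  have hle := h u hu hui
  rw [gradient_eq, ENNReal.ofReal_rpow_of_nonneg hI (by positivity)] at hle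
  have hle_real : ∫ x in G, |u x - ⨍ x in G, u x| ^ q ≤ K.toReal * I ^ (q / p) := by
    simp_rw [← Real.norm_eq_abs]
    rw [integral_norm_rpow_eq_toReal_lintegral (f := fun x => u x - ⨍ x in G, u x) hq.le
      (hui.aestronglyMeasurable.sub aestronglyMeasurable_const)]
    refine (ENNReal.toReal_mono (by finiteness) hle).trans_eq ?_
    rw [ENNReal.toReal_mul, ENNReal.toReal_ofReal (by positivity)]
  rw [average_eq]
  calc (∫ x in G, |u x - ⨍ x in G, u x| ^ q) ^ (1 / q)
      ≤ (K.toReal * I ^ (q / p)) ^ (1 / q) := by gcongr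
    _ = K.toReal ^ (1 / q) * I ^ (1 / p) := by
        rw [Real.mul_rpow ENNReal.toReal_nonneg (by positivity), ← Real.rpow_mul hI,
          div_mul_div_cancel₀' hq.ne']

end RealPoincareInequality

/-- Main theorem. A bounded domain `G ⊂ ℝⁿ` satisfying a
`β`-quasihyperbolic boundary condition, with `dim_M(∂G) ≤ λ ∈ [n-1, n)`, supports the
`(q,p)`-Poincaré inequality whenever `1 ≤ q < p < ∞` and
`p > q(n - λβ)/(q + β(n - λ))`. -/
theorem stmt_12 (n : ℕ) (hn : 2 ≤ n) (G : Set (EuclideanSpace ℝ (Fin n)))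
    (hGo : IsOpen G) (hGc : IsConnected G) (hGb : Bornology.IsBounded G)
    (β : ℝ) (hβ : β ∈ Set.Ioc (0:ℝ) 1) (hqhbc : QHBC G β)
    (l : ℝ) (hl : l ∈ Set.Ico ((n:ℝ) - 1) (n:ℝ))
    (hdim : upperMinkowskiDim n (frontier G) ≤ l)
    (q p : ℝ) (hq : 1 ≤ q) (hqp : q < p)
    (hp : p > q * ((n:ℝ) - l * β) / (q + β * ((n:ℝ) - l))) :
    SupportsPoincare G q p := by
  have : NeZero n := ⟨by lia⟩
  have hfr : (frontier G).Nonempty := frontier_nonempty_of_isBounded hGb hGc.nonempty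
  have hl₀ : 0 ≤ l := by linarith [hl.1, show (2 : ℝ) ≤ n from mod_cast hn]
  have hn_finrank : (finrank ℝ (EuclideanSpace ℝ (Fin n)) : ℝ) = n := by simp
  obtain ⟨x₀, hx₀, c, hqh⟩ := hqhbc
  obtain ⟨C, hC, hchain⟩ := hqh.exists_isWhitneyChain hGo hfr hGc.isPreconnected hβ.1 hx₀
  have hint : ∀ s, 0 < s → s < finrank ℝ (EuclideanSpace ℝ (Fin n)) - l →
      ∫⁻ x in G, ENNReal.ofReal ((1 / boundaryDist G x) ^ s) ≠ ⊤ := fun s hs hsl =>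
    (lintegral_one_div_boundaryDist_rpow_lt_top hGb hfr hl₀ hdim hs (hn_finrank ▸ hsl)).ne
  obtain ⟨K, hK, hpoincare⟩ := exists_lintegral_enorm_sub_rpow_le_of_isWhitneyChain (F := ℝ) hGo hGb
    hfr hβ hC hchain (hl.2.trans_eq hn_finrank.symm) hint hq hqp (by rwa [hn_finrank])
  have : IsFiniteMeasure (volume.restrict G) := ⟨by simpa using hGb.measure_lt_top⟩
  have hq₀ : 0 < q := one_pos.trans_le hq
  refine supportsPoincare_of_lintegral_le (K := 2 ^ q * K) hGo hq₀ (hq₀.trans hqp)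
    (by finiteness) fun u hu hui => ?_
  obtain ⟨m₀, hm₀⟩ := hpoincare u hu
  calc ∫⁻ y in G, ‖u y - ⨍ x in G, u x‖ₑ ^ q ≤ 2 ^ q * ∫⁻ y in G, ‖u y - m₀‖ₑ ^ q :=
        lintegral_enorm_sub_average_rpow_le hq hui m₀
    _ ≤ 2 ^ q * (K * (∫⁻ y in G, ‖fderiv ℝ u y‖ₑ ^ p) ^ (q / p)) := by gcongr
    _ = _ := (mul_assoc _ _ _).symm
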